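/- arXiv:1108.2985 — 8 statements merged into one kernel-verified Lean document; each statement's English description precedes it below -/
import Mathlib

section
/- Let n ≥ 1 and d ≥ n be natural numbers. Let M be the complex matrix with rows and columns indexed by S_n defined by M_{π,σ} = d^{l(π⁻¹σ)}. Then M is invertible, and for all complex matrices A, B with rows and columns indexed by functions {1,…,n} → {1,…,d}, one has ∫ Tr(A · U^{⊗n} · B · (U^{⊗n})†) dU = Σ_{π,σ ∈ S_n} Tr(A·V_π) · (M⁻¹)_{π,σ} · Tr(V_{σ⁻¹}·B), where the integral is with respect to the Haar probability measure on the group U(d) of d×d unitary matrices. -/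
open Matrix MeasureTheory

/-- The number of cycles of a permutation counting fixed points: the number of
(nontrivial) cycles in the cycle decomposition plus the number of fixed points. -/
def cycleCount {n : ℕ} (σ : Equiv.Perm (Fin n)) : ℕ :=
  σ.cycleType.card + (Finset.univ.filter fun x => σ x = x).card

/-- The permutation operator `V_π` on `(ℂ^d)^{⊗n}`, with rows and columns indexed by
functions `Fin n → Fin d`: `(V_π)_{f,g} = 1` if `f = g ∘ π` and `0` otherwise. -/
def permOperator (n d : ℕ) (π : Equiv.Perm (Fin n)) :
    Matrix (Fin n → Fin d) (Fin n → Fin d) ℂ :=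
  Matrix.of fun f g => if f = g ∘ π then (1 : ℂ) else 0

/-- The `n`-fold tensor (Kronecker) power `U^{⊗n}` of a `d × d` matrix `U`, with entries
`(U^{⊗n})_{f,g} = ∏ k, U (f k) (g k)`. -/
def tensorPow (n d : ℕ) (U : Matrix (Fin d) (Fin d) ℂ) :
    Matrix (Fin n → Fin d) (Fin n → Fin d) ℂ :=
  Matrix.of fun f g => ∏ k, U (f k) (g k)


lemma tw_mul {n d : ℕ} (A B : Matrix (Fin d) (Fin d) ℂ) :
    tensorPow n d (A * B) = tensorPow n d A * tensorPow n d B := by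
  ext f g
  simp only [tensorPow, Matrix.of_apply, Matrix.mul_apply]
  rw [Finset.prod_univ_sum]
  simp [Fintype.piFinset_univ, Finset.prod_mul_distrib]

lemma tw_one {n d : ℕ} : tensorPow n d 1 = 1 := by
  ext f g
  simp only [tensorPow, Matrix.of_apply, Matrix.one_apply]
  rw [Finset.prod_ite_zero]
  simp [funext_iff]

lemma tw_star {n d : ℕ} (A : Matrix (Fin d) (Fin d) ℂ) :
    (tensorPow n d A)ᴴ = tensorPow n d Aᴴ := by
  ext f g
  simp [tensorPow, Matrix.conjTranspose_apply]

lemma tw_V_mul {n d : ℕ} (π σ : Equiv.Perm (Fin n)) :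
    permOperator n d π * permOperator n d σ = permOperator n d (σ * π) := by
  ext f g
  simp only [permOperator, Matrix.of_apply, Matrix.mul_apply]
  rw [Finset.sum_eq_single (g ∘ σ)]
  · simp only [Function.comp_assoc, if_true, mul_one, Equiv.Perm.coe_mul]
    congr 1
  · intro b _ hb
    simp [hb]
  · simp

lemma tw_comp_iff {n d : ℕ} (π : Equiv.Perm (Fin n)) (f g : Fin n → Fin d) :
    f = g ∘ π ↔ g = f ∘ ⇑π⁻¹ := by
  constructor
  · rintro rfl; ext x; simp
  · rintro rfl; ext x; simp

lemma tw_V_star {n d : ℕ} (π : Equiv.Perm (Fin n)) :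
    (permOperator n d π)ᴴ = permOperator n d π⁻¹ := by
  ext f g
  simp only [permOperator, Matrix.of_apply, Matrix.conjTranspose_apply]
  have h := tw_comp_iff π g f
  by_cases h1 : g = f ∘ π
  · rw [if_pos h1, if_pos (h.1 h1), star_one]
  · rw [if_neg h1, if_neg (fun h2 => h1 (h.2 h2)), star_zero]

lemma tw_V_comm {n d : ℕ} (π : Equiv.Perm (Fin n)) (A : Matrix (Fin d) (Fin d) ℂ) :
    permOperator n d π * tensorPow n d A = tensorPow n d A * permOperator n d π := by
  ext f g
  simp only [permOperator, tensorPow, Matrix.of_apply, Matrix.mul_apply]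
  rw [Finset.sum_eq_single (f ∘ ⇑π⁻¹), Finset.sum_eq_single (g ∘ π)]
  · rw [if_pos ((tw_comp_iff _ _ _).2 rfl), if_pos rfl, one_mul, mul_one]
    rw [← Equiv.prod_comp π]
    simp
  · intro b _ hb
    simp [hb]
  · simp
  · intro b _ hb
    rw [if_neg, zero_mul]
    intro h
    exact hb ((tw_comp_iff _ _ _).1 h)
  · simp

open Classical in
lemma tw_card_quot {n : ℕ} (σ : Equiv.Perm (Fin n)) :
    Nat.card (Quotient (Equiv.Perm.SameCycle.setoid σ)) = cycleCount σ := by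
  let F : Fin n → Equiv.Perm (Fin n) ⊕ Fin n :=
    fun x => if σ x = x then Sum.inr x else Sum.inl (σ.cycleOf x)
  have h1 : Equiv.Perm.SameCycle.setoid σ = Setoid.ker F := by
    ext x y
    change σ.SameCycle x y ↔ F x = F y
    by_cases hx : σ x = x <;> by_cases hy : σ y = y
    · simp only [F, hx, hy, if_true, Sum.inr.injEq]
      constructor
      · intro h
        exact (Equiv.Perm.SameCycle.eq_of_left h hx)
      · rintro rfl; rfl
    · simp only [F, hx, hy, if_true, if_false, reduceCtorEq, iff_false]
      intro h
      exact hy (h.apply_eq_self_iff.1 hx)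
    · simp only [F, hx, hy, if_true, if_false, reduceCtorEq, iff_false]
      intro h
      exact hx (h.apply_eq_self_iff.2 hy)
    · simp only [F, hx, hy, if_false, Sum.inl.injEq]
      exact Equiv.Perm.sameCycle_iff_cycleOf_eq_of_mem_support
        (Equiv.Perm.mem_support.2 hx) (Equiv.Perm.mem_support.2 hy)
  have h2 : Set.range F =
      ↑(σ.cycleFactorsFinset.disjSum (Finset.univ.filter fun x => σ x = x)) := by
    ext z
    simp only [Set.mem_range, Finset.mem_coe]
    constructor
    · rintro ⟨x, rfl⟩
      by_cases hx : σ x = x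
      · simp [F, hx]
      · simp only [F, hx, if_false, Finset.inl_mem_disjSum]
        exact Equiv.Perm.cycleOf_mem_cycleFactorsFinset_iff.2 (Equiv.Perm.mem_support.2 hx)
    · rcases z with c | x
      · intro hc
        rw [Finset.inl_mem_disjSum] at hc
        obtain ⟨a, ha⟩ := (Equiv.Perm.mem_cycleFactorsFinset_iff.1 hc).1.nonempty_support
        refine ⟨a, ?_⟩
        have : a ∈ σ.support := Equiv.Perm.mem_cycleFactorsFinset_support_le hc ha
        simp only [F, Equiv.Perm.mem_support.1 this, if_false]
        rw [Equiv.Perm.cycle_is_cycleOf ha hc]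
      · intro hx
        simp at hx
        exact ⟨x, by simp [F, hx]⟩
  rw [h1, Nat.card_congr (Setoid.quotientKerEquivRange F), h2]
  simp [cycleCount, Equiv.Perm.cycleType_def]

lemma tw_fix_iff {n d : ℕ} (σ : Equiv.Perm (Fin n)) (f : Fin n → Fin d) :
    f = f ∘ σ ↔ Equiv.Perm.SameCycle.setoid σ ≤ Setoid.ker f := by
  constructor
  · intro h x y hxy
    obtain ⟨k, rfl⟩ : ∃ k : ℕ, (σ ^ k) x = y :=
      (Equiv.Perm.SameCycle.exists_pow_eq σ hxy).imp fun _ h => h.2.2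
    change f x = f _
    clear hxy
    induction k with
    | zero => simp
    | succ k ih =>
      rw [pow_succ', Equiv.Perm.mul_apply, ih]
      exact congrFun h _
  · intro h
    ext x
    have : f x = f (σ x) := h (show σ.SameCycle x (σ x) from ⟨1, by simp⟩)
    simp [← this]

lemma tw_V_trace {n d : ℕ} (σ : Equiv.Perm (Fin n)) :
    (permOperator n d σ).trace = (d : ℂ) ^ cycleCount σ := by
  simp only [permOperator, Matrix.trace, Matrix.diag_apply, Matrix.of_apply]
  rw [Finset.sum_boole, ← tw_card_quot]
  have : (Finset.univ.filter fun f : Fin n → Fin d => f = f ∘ σ).card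
      = d ^ Nat.card (Quotient (Equiv.Perm.SameCycle.setoid σ)) := by
    rw [← Fintype.card_subtype, ← Nat.card_eq_fintype_card]
    rw [Nat.card_congr ((Equiv.subtypeEquivRight (tw_fix_iff σ)).trans (Setoid.liftEquiv _))]
    simp [Nat.card_fun]
  rw [this]; simp

lemma tw_M_eq {n d : ℕ} (π σ : Equiv.Perm (Fin n)) :
    (permOperator n d π⁻¹ * permOperator n d σ).trace = (d : ℂ) ^ cycleCount (π⁻¹ * σ) := by
  rw [Matrix.trace_mul_comm, tw_V_mul, tw_V_trace]

lemma tw_V_entry {n d : ℕ} (ι : Fin n → Fin d) (hι : Function.Injective ι)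
    (c : Equiv.Perm (Fin n) → ℂ) (π : Equiv.Perm (Fin n)) :
    (∑ σ, c σ • permOperator n d σ) (ι ∘ π) ι = c π := by
  simp only [Matrix.sum_apply, Matrix.smul_apply, permOperator, Matrix.of_apply]
  rw [Finset.sum_eq_single π]
  · simp
  · intro b _ hb
    rw [if_neg, smul_zero]
    intro h
    apply hb
    ext x
    have := hι (congrFun h x)
    rw [this]
  · simp

open scoped ComplexOrder in
lemma tw_unit (n d : ℕ) (hnd : n ≤ d)
    (M : Matrix (Equiv.Perm (Fin n)) (Equiv.Perm (Fin n)) ℂ)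
    (hM : ∀ π σ : Equiv.Perm (Fin n), M π σ = (d : ℂ) ^ cycleCount (π⁻¹ * σ)) :
    IsUnit M.det := by
  rw [isUnit_iff_ne_zero]
  intro h0
  obtain ⟨c, hc, hMc⟩ := Matrix.exists_mulVec_eq_zero_iff.2 h0
  set X := ∑ σ, c σ • permOperator n d σ with hX
  have h1 : (Xᴴ * X).trace = star c ⬝ᵥ (M *ᵥ c) := by
    simp only [hX, Matrix.conjTranspose_sum, Matrix.conjTranspose_smul, tw_V_star,
      Finset.sum_mul, Finset.mul_sum, Matrix.trace_sum, dotProduct, Matrix.mulVec,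
      Matrix.smul_mul, Matrix.mul_smul, Matrix.trace_smul, tw_M_eq, hM]
    rw [Finset.sum_comm]
    refine Finset.sum_congr rfl fun π _ => Finset.sum_congr rfl fun σ _ => ?_
    simp; ring
  rw [hMc, dotProduct_zero, Matrix.trace_conjTranspose_mul_self_eq_zero_iff] at h1
  apply hc
  ext π
  rw [← tw_V_entry (Fin.castLE hnd) (Fin.castLE_injective hnd) c π, ← hX, h1]
  simp



lemma tw_diag_entry {n d : ℕ} (D : Fin d → ℂ) :
    tensorPow n d (Matrix.diagonal D) = Matrix.diagonal fun f => ∏ k, D (f k) := by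
  ext f g
  simp only [tensorPow, Matrix.of_apply, Matrix.diagonal_apply]
  rw [Finset.prod_ite_zero]
  simp [funext_iff]

lemma tw_weight {n d : ℕ} (X : Matrix (Fin n → Fin d) (Fin n → Fin d) ℂ)
    (hX : ∀ U ∈ Matrix.unitaryGroup (Fin d) ℂ, X * tensorPow n d U = tensorPow n d U * X)
    (f g : Fin n → Fin d) (h : X f g ≠ 0) (j : Fin d) :
    (Finset.univ.filter fun k => f k = j).card = (Finset.univ.filter fun k => g k = j).card := by
  obtain ⟨ζ, hζ⟩ : ∃ ζ : ℂ, IsPrimitiveRoot ζ (n + 1) :=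
    ⟨_, Complex.isPrimitiveRoot_exp (n + 1) (by omega)⟩
  let D : Fin d → ℂ := fun i => if i = j then ζ else 1
  have hζ1 : star ζ * ζ = 1 := by
    have := hζ.norm'_eq_one (by omega)
    rw [mul_comm]
    simp [Complex.mul_conj, Complex.normSq_eq_norm_sq, this]
  have hU : Matrix.diagonal D ∈ Matrix.unitaryGroup (Fin d) ℂ := by
    rw [Matrix.mem_unitaryGroup_iff', Matrix.star_eq_conjTranspose,
      Matrix.diagonal_conjTranspose, Matrix.diagonal_mul_diagonal, ← Matrix.diagonal_one]
    congr 1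
    ext i
    by_cases hi : i = j
    · simpa [D, hi] using hζ1
    · simp [D, hi]
  have h2 := congrFun (congrFun (hX _ hU) f) g
  rw [tw_diag_entry, Matrix.mul_diagonal, Matrix.diagonal_mul, mul_comm] at h2
  have h3 := mul_right_cancel₀ h h2
  simp only [D, Finset.prod_ite, Finset.prod_const, one_pow, mul_one] at h3
  have hb : ∀ f : Fin n → Fin d, (Finset.univ.filter fun k => f k = j).card < n + 1 := by
    intro f
    have := Finset.card_filter_le (Finset.univ : Finset (Fin n)) (fun k => f k = j)
    simp at this
    omega
  exact (hζ.pow_inj (hb g) (hb f) h3).symm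

lemma tw_comm_diag {n d : ℕ} (X : Matrix (Fin n → Fin d) (Fin n → Fin d) ℂ)
    (hX : ∀ U ∈ Matrix.unitaryGroup (Fin d) ℂ, X * tensorPow n d U = tensorPow n d U * X)
    (D : Fin d → ℂ) :
    X * tensorPow n d (Matrix.diagonal D) = tensorPow n d (Matrix.diagonal D) * X := by
  ext f g
  rw [tw_diag_entry, Matrix.mul_diagonal, Matrix.diagonal_mul, mul_comm]
  by_cases h : X f g = 0
  · simp [h]
  congr 1
  have hp : ∀ f : Fin n → Fin d,
      ∏ k, D (f k) = ∏ j, D j ^ (Finset.univ.filter fun k => f k = j).card := by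
    intro f
    rw [Finset.prod_comp]
    apply Finset.prod_subset (Finset.subset_univ _)
    intro x _ hx
    rw [Finset.card_eq_zero.2, pow_zero]
    rw [Finset.filter_eq_empty_iff]
    intro y _ hy
    exact hx (by simp [← hy])
  rw [hp, hp]
  exact Finset.prod_congr rfl fun j _ => by rw [tw_weight X hX f g h j]

lemma tw_comm_mul {n d : ℕ} (X : Matrix (Fin n → Fin d) (Fin n → Fin d) ℂ)
    {A B : Matrix (Fin d) (Fin d) ℂ}
    (hA : X * tensorPow n d A = tensorPow n d A * X)
    (hB : X * tensorPow n d B = tensorPow n d B * X) :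
    X * tensorPow n d (A * B) = tensorPow n d (A * B) * X := by
  rw [tw_mul, ← mul_assoc, hA, mul_assoc, hB, mul_assoc]

lemma tw_comm_herm {n d : ℕ} (X : Matrix (Fin n → Fin d) (Fin n → Fin d) ℂ)
    (hX : ∀ U ∈ Matrix.unitaryGroup (Fin d) ℂ, X * tensorPow n d U = tensorPow n d U * X)
    (H : Matrix (Fin d) (Fin d) ℂ) (hH : H.IsHermitian) :
    X * tensorPow n d H = tensorPow n d H * X := by
  rw [hH.spectral_theorem, Unitary.conjStarAlgAut_apply]
  refine tw_comm_mul X (tw_comm_mul X (hX _ (hH.eigenvectorUnitary).2) (tw_comm_diag X hX _)) ?_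
  exact hX _ (star (hH.eigenvectorUnitary)).2

lemma tw_comm_real {n d : ℕ} (X : Matrix (Fin n → Fin d) (Fin n → Fin d) ℂ)
    (hX : ∀ U ∈ Matrix.unitaryGroup (Fin d) ℂ, X * tensorPow n d U = tensorPow n d U * X)
    (A : Matrix (Fin d) (Fin d) ℝ) :
    X * tensorPow n d (A.map Complex.ofRealHom) = tensorPow n d (A.map Complex.ofRealHom) * X := by
  refine Matrix.diagonal_transvection_induction
    (fun A => X * tensorPow n d (A.map Complex.ofRealHom)
      = tensorPow n d (A.map Complex.ofRealHom) * X) A ?_ ?_ ?_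
  · intro D _
    simp only [Matrix.diagonal_map (map_zero Complex.ofRealHom)]
    exact tw_comm_diag X hX _
  · rintro ⟨i, j, hij, c⟩
    have hsymm : ∀ S : Matrix (Fin d) (Fin d) ℝ, Sᵀ = S →
        (S.map Complex.ofRealHom).IsHermitian := by
      intro S hS
      ext a b
      have : S b a = S a b := congrFun (congrFun hS a) b
      simp [this]
    let P : Matrix (Fin d) (Fin d) ℝ := (Equiv.swap i j).permMatrix ℝ
    have hPt : Pᵀ = P := by
      simp [P, Matrix.transpose_permMatrix]
    have hPP : P * P = 1 := by
      simp only [P, ← Matrix.permMatrix_mul]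
      simp
    have hT : (Matrix.TransvectionStruct.mk i j hij c).toMatrix
        = (P + Matrix.single i i c) * P := by
      rw [add_mul, hPP]
      simp only [Matrix.TransvectionStruct.toMatrix, Matrix.transvection]
      congr 1
      ext a b
      rw [Matrix.mul_apply, Finset.sum_eq_single i]
      · simp only [P, Equiv.Perm.permMatrix, Matrix.single_apply, Equiv.toPEquiv_apply,
          PEquiv.toMatrix_apply, Equiv.swap_apply_left]
        by_cases ha : i = a <;> by_cases hb : j = b <;> simp [ha, hb]
      · intro x _ hx
        simp [Matrix.single_apply, Ne.symm hx]
      · simp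
    rw [hT, Matrix.map_mul]
    refine tw_comm_mul X (tw_comm_herm X hX _ (hsymm _ ?_)) (tw_comm_herm X hX _ (hsymm _ hPt))
    simp [hPt]
  · intro A B hA hB
    simp only [Matrix.map_mul]
    exact tw_comm_mul X hA hB

lemma tw_span {n d : ℕ} (hnd : n ≤ d) (X : Matrix (Fin n → Fin d) (Fin n → Fin d) ℂ)
    (hX : ∀ U ∈ Matrix.unitaryGroup (Fin d) ℂ, X * tensorPow n d U = tensorPow n d U * X) :
    ∃ c : Equiv.Perm (Fin n) → ℂ, X = ∑ σ, c σ • permOperator n d σ := by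
  let ι : Fin n → Fin d := Fin.castLE hnd
  have hι : Function.Injective ι := Fin.castLE_injective hnd
  let c : Equiv.Perm (Fin n) → ℂ := fun π => X (ι ∘ π) ι
  refine ⟨c, ?_⟩
  set Y := X - ∑ σ, c σ • permOperator n d σ with hYdef
  have hY : ∀ U ∈ Matrix.unitaryGroup (Fin d) ℂ,
      Y * tensorPow n d U = tensorPow n d U * Y := by
    intro U hU
    rw [hYdef, sub_mul, mul_sub, hX U hU, Finset.sum_mul, Finset.mul_sum]
    congr 1
    refine Finset.sum_congr rfl fun σ _ => ?_
    rw [Matrix.smul_mul, Matrix.mul_smul, tw_V_comm]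
  have hY0 : ∀ f, Y f ι = 0 := by
    intro f
    by_contra hne
    have hw := tw_weight Y hY f ι hne
    have hfin : Function.Injective f := by
      intro a b hab
      have h1 : (Finset.univ.filter fun k => ι k = f a).card ≤ 1 := by
        rw [Finset.card_le_one]
        intro x hx y hy
        simp at hx hy
        exact hι (hx.trans hy.symm)
      rw [← hw, Finset.card_le_one] at h1
      exact h1 a (by simp) b (by simp [hab])
    have hr : ∀ k, ∃ m, ι m = f k := by
      intro k
      have h1 : 0 < (Finset.univ.filter fun m => f m = f k).card :=
        Finset.card_pos.2 ⟨k, by simp⟩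
      rw [hw] at h1
      obtain ⟨m, hm⟩ := Finset.card_pos.1 h1
      exact ⟨m, by simpa using hm⟩
    choose p hp using hr
    have hpi : Function.Injective p := by
      intro a b hab
      apply hfin
      rw [← hp, ← hp, hab]
    let π : Equiv.Perm (Fin n) := Equiv.ofBijective p (Finite.injective_iff_bijective.1 hpi)
    have hf : f = ι ∘ π := by
      ext k
      simp [π, hp]
    apply hne
    rw [hf, hYdef, Matrix.sub_apply, tw_V_entry ι hι]
    simp [c]
  have hYz : Y = 0 := by
    ext f g
    let A : Matrix (Fin d) (Fin d) ℝ :=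
      Matrix.of fun a b => if ∃ k, ι k = b ∧ g k = a then 1 else 0
    have hA := congrFun (congrFun (tw_comm_real Y hY A) f) ι
    have hcol : ∀ h, tensorPow n d (A.map Complex.ofRealHom) h ι = if h = g then 1 else 0 := by
      intro h
      have : ∀ k, (A.map Complex.ofRealHom) (h k) (ι k) = if h k = g k then (1 : ℂ) else 0 := by
        intro k
        simp [A, hι.eq_iff, apply_ite, eq_comm]
      simp only [tensorPow, Matrix.of_apply, this]
      rw [Finset.prod_ite_zero]
      simp [funext_iff]
    rw [Matrix.mul_apply, Matrix.mul_apply] at hA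
    simpa [hcol, hY0] using hA
  exact sub_eq_zero.1 hYz

lemma tw_integral (n d : ℕ) [MeasurableSpace (Matrix.unitaryGroup (Fin d) ℂ)]
    [BorelSpace (Matrix.unitaryGroup (Fin d) ℂ)]
    (μ : Measure (Matrix.unitaryGroup (Fin d) ℂ)) [μ.IsHaarMeasure] [IsProbabilityMeasure μ]
    (B : Matrix (Fin n → Fin d) (Fin n → Fin d) ℂ) :
    ∃ E : Matrix (Fin n → Fin d) (Fin n → Fin d) ℂ,
      (∀ U ∈ Matrix.unitaryGroup (Fin d) ℂ, E * tensorPow n d U = tensorPow n d U * E) ∧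
      ∀ A : Matrix (Fin n → Fin d) (Fin n → Fin d) ℂ,
        (∫ U : Matrix.unitaryGroup (Fin d) ℂ,
          (A * tensorPow n d (U : Matrix (Fin d) (Fin d) ℂ) * B
            * (tensorPow n d (U : Matrix (Fin d) (Fin d) ℂ))ᴴ).trace ∂μ) = (A * E).trace := by
  let K : Matrix.unitaryGroup (Fin d) ℂ → Matrix (Fin n → Fin d) (Fin n → Fin d) ℂ :=
    fun U => tensorPow n d (U : Matrix (Fin d) (Fin d) ℂ) * B
      * (tensorPow n d (U : Matrix (Fin d) (Fin d) ℂ))ᴴ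
  let E : Matrix (Fin n → Fin d) (Fin n → Fin d) ℂ := Matrix.of fun f g => ∫ U, K U f g ∂μ
  have hTc : ∀ f g, Continuous fun U : Matrix.unitaryGroup (Fin d) ℂ =>
      tensorPow n d (U : Matrix (Fin d) (Fin d) ℂ) f g := by
    intro f g
    simp only [tensorPow, Matrix.of_apply]
    exact continuous_finsetProd _ fun k _ =>
      continuous_subtype_val.matrix_elem _ _
  have hTb : ∀ f g (U : Matrix.unitaryGroup (Fin d) ℂ),
      ‖tensorPow n d (U : Matrix (Fin d) (Fin d) ℂ) f g‖ ≤ 1 := by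
    intro f g U
    simp only [tensorPow, Matrix.of_apply, norm_prod]
    exact Finset.prod_le_one (fun _ _ => norm_nonneg _)
      fun k _ => entry_norm_bound_of_unitary U.2 _ _
  have hK : ∀ f g, Integrable (fun U => K U f g) μ := by
    intro f g
    simp only [K, Matrix.mul_apply, Finset.sum_mul]
    refine integrable_finsetSum _ fun i _ => integrable_finsetSum _ fun j _ => ?_
    have h1 : Continuous fun U : Matrix.unitaryGroup (Fin d) ℂ =>
        tensorPow n d (U : Matrix (Fin d) (Fin d) ℂ) f j * B j i
          * (tensorPow n d (U : Matrix (Fin d) (Fin d) ℂ))ᴴ i g :=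
      ((hTc f j).mul continuous_const).mul (by
        simp only [Matrix.conjTranspose_apply]
        exact (hTc g i).star)
    refine Integrable.of_bound h1.aestronglyMeasurable ‖B j i‖ (Filter.Eventually.of_forall ?_)
    intro U
    rw [norm_mul, norm_mul, Matrix.conjTranspose_apply, norm_star]
    calc _ ≤ 1 * ‖B j i‖ * 1 := by
          gcongr
          · exact hTb _ _ _
          · exact hTb _ _ _
      _ = _ := by ring
  have hPQ : ∀ (P Q : Matrix (Fin n → Fin d) (Fin n → Fin d) ℂ) f g,
      ∫ U, (P * K U * Q) f g ∂μ = (P * E * Q) f g := by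
    intro P Q f g
    simp only [Matrix.mul_apply, Finset.sum_mul, E, Matrix.of_apply]
    rw [integral_finsetSum]
    · refine Finset.sum_congr rfl fun i _ => ?_
      rw [integral_finsetSum]
      · refine Finset.sum_congr rfl fun j _ => ?_
        rw [integral_mul_const, integral_const_mul]
      · intro j _
        exact ((hK j i).const_mul _).mul_const _
    · intro i _
      exact integrable_finsetSum _ fun j _ => ((hK j i).const_mul _).mul_const _
  refine ⟨E, ?_, ?_⟩
  · intro W hW
    have hinv : tensorPow n d W * E * (tensorPow n d W)ᴴ = E := by
      ext f g
      rw [← hPQ]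
      change _ = ∫ U, K U f g ∂μ
      rw [← integral_mul_left_eq_self (μ := μ) (fun U => K U f g) ⟨W, hW⟩]
      congr 1
      ext U
      simp only [K, Submonoid.coe_mul, tw_mul, Matrix.conjTranspose_mul, mul_assoc]
    have hWW : (tensorPow n d W)ᴴ * tensorPow n d W = 1 := by
      rw [tw_star, ← tw_mul]
      have := Matrix.mem_unitaryGroup_iff'.1 hW
      rw [Matrix.star_eq_conjTranspose] at this
      rw [this, tw_one]
    conv_lhs => rw [← hinv]
    rw [mul_assoc, hWW, mul_one]
  · intro A
    have h1 : ∀ U : Matrix.unitaryGroup (Fin d) ℂ,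
        A * tensorPow n d (U : Matrix (Fin d) (Fin d) ℂ) * B
            * (tensorPow n d (U : Matrix (Fin d) (Fin d) ℂ))ᴴ = A * K U * 1 := by
      intro U
      simp only [K, mul_assoc, mul_one]
    have hEint : ∀ f, Integrable (fun U => (A * K U * (1 : Matrix (Fin n → Fin d) (Fin n → Fin d) ℂ)) f f) μ := by
      intro f
      simp only [mul_one]
      simp only [Matrix.mul_apply]
      exact integrable_finsetSum _ fun j _ => (hK j f).const_mul _
    simp only [h1, Matrix.trace, Matrix.diag_apply]
    rw [integral_finsetSum _ fun f _ => hEint f]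
    refine Finset.sum_congr rfl fun f _ => ?_
    rw [hPQ, mul_one]

theorem twirl_formula (n d : ℕ) (hn : 1 ≤ n) (hnd : n ≤ d)
    (M : Matrix (Equiv.Perm (Fin n)) (Equiv.Perm (Fin n)) ℂ)
    (hM : ∀ π σ : Equiv.Perm (Fin n), M π σ = (d : ℂ) ^ cycleCount (π⁻¹ * σ)) :
    IsUnit M.det ∧
      letI : MeasurableSpace (Matrix.unitaryGroup (Fin d) ℂ) := borel _
      ∀ μ : Measure (Matrix.unitaryGroup (Fin d) ℂ),
        μ.IsHaarMeasure → IsProbabilityMeasure μ →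
        ∀ A B : Matrix (Fin n → Fin d) (Fin n → Fin d) ℂ,
          (∫ U : Matrix.unitaryGroup (Fin d) ℂ,
              (A * tensorPow n d (U : Matrix (Fin d) (Fin d) ℂ) * B
                * (tensorPow n d (U : Matrix (Fin d) (Fin d) ℂ))ᴴ).trace ∂μ)
            = ∑ π : Equiv.Perm (Fin n), ∑ σ : Equiv.Perm (Fin n),
                (A * permOperator n d π).trace * M⁻¹ π σ
                  * (permOperator n d σ⁻¹ * B).trace := by
  refine ⟨tw_unit n d hnd M hM, ?_⟩
  intro μ hμ hp A B
  letI : MeasurableSpace (Matrix.unitaryGroup (Fin d) ℂ) := borel _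
  haveI : BorelSpace (Matrix.unitaryGroup (Fin d) ℂ) := ⟨rfl⟩
  have hu := tw_unit n d hnd M hM
  obtain ⟨E, hE, hEint⟩ := tw_integral n d μ B
  rw [hEint]
  obtain ⟨c, hc⟩ := tw_span hnd E hE
  have hVB : ∀ σ : Equiv.Perm (Fin n), (permOperator n d σ⁻¹ * B).trace = (M *ᵥ c) σ := by
    intro σ
    have h1 : (permOperator n d σ⁻¹ * E).trace = (permOperator n d σ⁻¹ * B).trace := by
      rw [← hEint]
      have : ∀ U : Matrix.unitaryGroup (Fin d) ℂ,
          (permOperator n d σ⁻¹ * tensorPow n d (U : Matrix (Fin d) (Fin d) ℂ) * B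
            * (tensorPow n d (U : Matrix (Fin d) (Fin d) ℂ))ᴴ).trace
          = (permOperator n d σ⁻¹ * B).trace := by
        intro U
        have hUU : (tensorPow n d (U : Matrix (Fin d) (Fin d) ℂ))ᴴ
            * tensorPow n d (U : Matrix (Fin d) (Fin d) ℂ) = 1 := by
          rw [tw_star, ← tw_mul]
          have := Matrix.mem_unitaryGroup_iff'.1 U.2
          rw [Matrix.star_eq_conjTranspose] at this
          rw [this, tw_one]
        rw [tw_V_comm, Matrix.trace_mul_comm, ← mul_assoc, ← mul_assoc, hUU, one_mul]
      simp only [this]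
      simp
    rw [← h1, hc]
    simp only [Finset.mul_sum, Matrix.trace_sum, Matrix.mul_smul, Matrix.trace_smul, tw_M_eq,
      Matrix.mulVec, dotProduct, hM]
    exact Finset.sum_congr rfl fun π _ => by rw [smul_eq_mul, mul_comm]
  have hinv : ∀ π, ∑ σ, M⁻¹ π σ * (M *ᵥ c) σ = c π := by
    intro π
    have : (M⁻¹ *ᵥ (M *ᵥ c)) π = c π := by
      rw [Matrix.mulVec_mulVec, Matrix.nonsing_inv_mul _ hu, Matrix.one_mulVec]
    exact this
  conv_lhs => rw [hc]
  simp only [hVB, mul_assoc, ← Finset.mul_sum, hinv]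
  simp only [Finset.mul_sum, Matrix.trace_sum, Matrix.mul_smul, Matrix.trace_smul, smul_eq_mul]
  exact Finset.sum_congr rfl fun π _ => mul_comm _ _
end

section
/- Let d_S, d_B ≥ 1 and let H = ℂ^{d_S}⊗ℂ^{d_B}. Let σ be any complex matrix on H, let (P_i)_{i∈I} be a finite family of complex matrices on H with P_i·P_j = δ_{ij}·P_i, P_i† = P_i and Σ_i P_i = 1, let (E_i)_{i∈I} be real numbers, t ∈ ℝ, and set W₀ = Σ_i e^{i t E_i}·P_i (so that W₀† = Σ_i e^{−i t E_i}·P_i). Let U be a unitary matrix on H. Define ρ_S = Tr_B( (U W₀ U†)† · σ · (U W₀ U†) ) and ω_S = Tr_B( Σ_i (U P_i U†) · σ · (U P_i U†) ). Then Tr[(ρ_S − ω_S)²] = Tr[ Y · U^{⊗4} · X · (U^{⊗4})† ], where, labelling the four tensor copies of H by 1,2,3,4: X = W₀⊗W₀⊗W₀†⊗W₀† − Σ_i W₀⊗P_i⊗W₀†⊗P_i − Σ_i P_i⊗W₀⊗P_i⊗W₀† + Σ_{i,j} P_i⊗P_j⊗P_i⊗P_j, and Y = V_{12:34}·(σ⊗σ⊗𝔽),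 with 𝔽 the operator on copies 3 and 4 that swaps the two ℂ^{d_S} factors and acts as the identity on the two ℂ^{d_B} factors, and V_{12:34} the operator on H^{⊗4} that swaps the block of copies (1,2) with the block of copies (3,4). -/
open Matrix

/-- Partial trace over the bath `B` of a matrix on `ℂ^{d_S} ⊗ ℂ^{d_B}`. -/
noncomputable def ptraceB (dS dB : ℕ) (X : Matrix (Fin dS × Fin dB) (Fin dS × Fin dB) ℂ) :
    Matrix (Fin dS) (Fin dS) ℂ :=
  Matrix.of fun s s' => ∑ b : Fin dB, X (s, b) (s', b)

/-- Fourfold tensor product `A ⊗ B ⊗ C ⊗ D` of matrices on `H`, defined entrywise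
on quadruple indices. -/
def tens4 {H : Type*} (A B C D : Matrix H H ℂ) :
    Matrix (H × H × H × H) (H × H × H × H) ℂ :=
  Matrix.of fun a b =>
    A a.1 b.1 * B a.2.1 b.2.1 * C a.2.2.1 b.2.2.1 * D a.2.2.2 b.2.2.2

/-- The operator `V_{12:34}` on `H^{⊗4}` swapping the block of copies `(1,2)` with the block
of copies `(3,4)`. -/
def swap1234 {H : Type*} [DecidableEq H] : Matrix (H × H × H × H) (H × H × H × H) ℂ :=
  Matrix.of fun a b =>
    if a.1 = b.2.2.1 ∧ a.2.1 = b.2.2.2 ∧ a.2.2.1 = b.1 ∧ a.2.2.2 = b.2.1 then (1 : ℂ) else 0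

/-- The operator `σ ⊗ σ ⊗ 𝔽` on `H^{⊗4}`, where `𝔽` acts on copies 3 and 4 by swapping the
two `ℂ^{d_S}` factors and acting as the identity on the two `ℂ^{d_B}` factors. -/
def sigmaSigmaF (dS dB : ℕ) (σ : Matrix (Fin dS × Fin dB) (Fin dS × Fin dB) ℂ) :
    Matrix ((Fin dS × Fin dB) × (Fin dS × Fin dB) × (Fin dS × Fin dB) × (Fin dS × Fin dB))
      ((Fin dS × Fin dB) × (Fin dS × Fin dB) × (Fin dS × Fin dB) × (Fin dS × Fin dB)) ℂ :=
  Matrix.of fun a b =>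
    σ a.1 b.1 * σ a.2.1 b.2.1 *
      (if a.2.2.1 = (b.2.2.2.1, b.2.2.1.2) ∧ a.2.2.2 = (b.2.2.1.1, b.2.2.2.2)
        then (1 : ℂ) else 0)

theorem tens4_mul_aux {H : Type*} [Fintype H] (A B C D A' B' C' D' : Matrix H H ℂ) :
    tens4 A B C D * tens4 A' B' C' D' = tens4 (A * A') (B * B') (C * C') (D * D') := by
  ext a b
  simp only [tens4, Matrix.mul_apply, Matrix.of_apply, Fintype.sum_prod_type (α₁ := H)]
  simp only [mul_assoc]
  simp only [Finset.sum_mul_sum]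
  simp only [Finset.mul_sum]
  refine Finset.sum_congr rfl fun x _ => ?_
  refine Finset.sum_congr rfl fun y _ => ?_
  refine Finset.sum_congr rfl fun z _ => ?_
  refine Finset.sum_congr rfl fun w _ => ?_
  ring

theorem tens4_conj_aux {H : Type*} (A B C D : Matrix H H ℂ) :
    (tens4 A B C D)ᴴ = tens4 Aᴴ Bᴴ Cᴴ Dᴴ := by
  ext a b
  simp [tens4, Matrix.conjTranspose_apply]

theorem Y_apply_aux (dS dB : ℕ) (σ : Matrix (Fin dS × Fin dB) (Fin dS × Fin dB) ℂ)
    (a b : (Fin dS × Fin dB) × (Fin dS × Fin dB) × (Fin dS × Fin dB) × (Fin dS × Fin dB)) :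
    ((swap1234 (H := Fin dS × Fin dB) * sigmaSigmaF dS dB σ :
      Matrix ((Fin dS × Fin dB) × (Fin dS × Fin dB) × (Fin dS × Fin dB) × (Fin dS × Fin dB))
      ((Fin dS × Fin dB) × (Fin dS × Fin dB) × (Fin dS × Fin dB) × (Fin dS × Fin dB)) ℂ)) a b
      = sigmaSigmaF dS dB σ (a.2.2.1, a.2.2.2, a.1, a.2.1) b := by
  rw [Matrix.mul_apply, Finset.sum_eq_single (a.2.2.1, a.2.2.2, a.1, a.2.1)]
  · simp [swap1234]
  · rintro ⟨c1, c2, c3, c4⟩ _ hc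
    simp only [swap1234, Matrix.of_apply]
    rw [if_neg, zero_mul]
    rintro ⟨h1, h2, h3, h4⟩
    apply hc
    simp_all
  · simp

theorem key_aux (dS dB : ℕ) (σ A B C D : Matrix (Fin dS × Fin dB) (Fin dS × Fin dB) ℂ) :
    (swap1234 * sigmaSigmaF dS dB σ * tens4 A B C D).trace
      = (ptraceB dS dB (C * σ * A) * ptraceB dS dB (D * σ * B)).trace := by
  have h1 : (swap1234 * sigmaSigmaF dS dB σ * tens4 A B C D).trace
      = ∑ b3, ∑ b4, (C * σ * A) b3 (b4.1, b3.2) * (D * σ * B) b4 (b3.1, b4.2) := by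
    rw [Matrix.trace_mul_comm]
    have e : ∀ b3 b4 : Fin dS × Fin dB,
        (C * σ * A) b3 (b4.1, b3.2) * (D * σ * B) b4 (b3.1, b4.2)
        = ∑ b1, ∑ b2, ∑ a1, ∑ a2, ∑ a3, ∑ a4,
          A b1 a1 * B b2 a2 * C b3 a3 * D b4 a4 * (σ a3 b1 * σ a4 b2 *
          (if a1 = (b4.1, b3.2) ∧ a2 = (b3.1, b4.2) then (1 : ℂ) else 0)) := by
      intro b3 b4
      rw [Matrix.mul_apply, Matrix.mul_apply, Finset.sum_mul_sum]
      refine Finset.sum_congr rfl fun b1 _ => ?_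
      refine Finset.sum_congr rfl fun b2 _ => ?_
      rw [Finset.sum_eq_single (b4.1, b3.2), Finset.sum_eq_single (b3.1, b4.2)]
      · simp only [Matrix.mul_apply, Finset.sum_mul, Finset.mul_sum]
        rw [Finset.sum_comm]
        refine Finset.sum_congr rfl fun a3 _ => ?_
        refine Finset.sum_congr rfl fun a4 _ => ?_
        simp
        ring
      · intro c _ hc
        simp [hc]
      · simp
      · intro c _ hc
        simp [hc]
      · simp
    simp only [e]
    simp only [Matrix.trace, Matrix.diag_apply]
    simp only [Matrix.mul_apply (M := tens4 A B C D), Y_apply_aux]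
    simp only [Fintype.sum_prod_type (α₁ := Fin dS × Fin dB), sigmaSigmaF, tens4, Matrix.of_apply]
    have r : ∀ f : (Fin dS × Fin dB) → (Fin dS × Fin dB) → (Fin dS × Fin dB) →
        (Fin dS × Fin dB) → ℂ,
        ∑ b1, ∑ b2, ∑ b3, ∑ b4, f b1 b2 b3 b4 = ∑ b3, ∑ b4, ∑ b1, ∑ b2, f b1 b2 b3 b4 := by
      intro f
      have := Finset.sum_comm (s := (Finset.univ : Finset ((Fin dS × Fin dB) × (Fin dS × Fin dB))))
        (t := (Finset.univ : Finset ((Fin dS × Fin dB) × (Fin dS × Fin dB))))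
        (f := fun x y => f x.1 x.2 y.1 y.2)
      simpa only [Fintype.sum_prod_type (α₁ := Fin dS × Fin dB)] using this
    rw [r]
  rw [h1]
  simp only [Matrix.trace, Matrix.diag_apply,
    Matrix.mul_apply (M := ptraceB dS dB (C * σ * A))]
  simp only [ptraceB, Matrix.of_apply, Fintype.sum_prod_type (α₁ := Fin dS), Finset.sum_mul_sum]
  refine Finset.sum_congr rfl fun s _ => ?_
  rw [Finset.sum_comm]

theorem ptrace_sum_aux {I : Type*} [Fintype I] (dS dB : ℕ)
    (f : I → Matrix (Fin dS × Fin dB) (Fin dS × Fin dB) ℂ) :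
    ptraceB dS dB (∑ i, f i) = ∑ i, ptraceB dS dB (f i) := by
  ext s s'
  simp only [ptraceB, Matrix.of_apply, Matrix.sum_apply]
  rw [Finset.sum_comm]

theorem distance_to_equilibrium_as_fourfold_twirl
    (dS dB : ℕ) (hS : 1 ≤ dS) (hB : 1 ≤ dB)
    {I : Type*} [Fintype I] [DecidableEq I]
    (σ : Matrix (Fin dS × Fin dB) (Fin dS × Fin dB) ℂ)
    (P : I → Matrix (Fin dS × Fin dB) (Fin dS × Fin dB) ℂ)
    (hPmul : ∀ i j, P i * P j = if i = j then P i else 0)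
    (hPherm : ∀ i, (P i)ᴴ = P i)
    (hPsum : ∑ i, P i = 1)
    (E : I → ℝ) (t : ℝ)
    (W₀ : Matrix (Fin dS × Fin dB) (Fin dS × Fin dB) ℂ)
    (hW₀ : W₀ = ∑ i, Complex.exp (Complex.I * (t : ℂ) * (E i : ℂ)) • P i)
    (U : Matrix (Fin dS × Fin dB) (Fin dS × Fin dB) ℂ)
    (hU : U ∈ Matrix.unitaryGroup (Fin dS × Fin dB) ℂ)
    (ρS ωS : Matrix (Fin dS) (Fin dS) ℂ)
    (hρS : ρS = ptraceB dS dB ((U * W₀ * Uᴴ)ᴴ * σ * (U * W₀ * Uᴴ)))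
    (hωS : ωS = ptraceB dS dB (∑ i, (U * P i * Uᴴ) * σ * (U * P i * Uᴴ)))
    (X Y : Matrix ((Fin dS × Fin dB) × (Fin dS × Fin dB) × (Fin dS × Fin dB) × (Fin dS × Fin dB))
      ((Fin dS × Fin dB) × (Fin dS × Fin dB) × (Fin dS × Fin dB) × (Fin dS × Fin dB)) ℂ)
    (hX : X = tens4 W₀ W₀ W₀ᴴ W₀ᴴ
        - ∑ i, tens4 W₀ (P i) W₀ᴴ (P i)
        - ∑ i, tens4 (P i) W₀ (P i) W₀ᴴ
        + ∑ i, ∑ j, tens4 (P i) (P j) (P i) (P j))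
    (hY : Y = swap1234 * sigmaSigmaF dS dB σ) :
    ((ρS - ωS) * (ρS - ωS)).trace
      = (Y * tens4 U U U U * X * (tens4 U U U U)ᴴ).trace := by
  have key : ∀ A B C D : Matrix (Fin dS × Fin dB) (Fin dS × Fin dB) ℂ,
      (Y * tens4 U U U U * tens4 A B C D * (tens4 U U U U)ᴴ).trace
        = (ptraceB dS dB ((U * C * Uᴴ) * σ * (U * A * Uᴴ))
          * ptraceB dS dB ((U * D * Uᴴ) * σ * (U * B * Uᴴ))).trace := by
    intro A B C D
    rw [tens4_conj_aux, Matrix.mul_assoc, Matrix.mul_assoc, tens4_mul_aux, tens4_mul_aux, hY,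
      key_aux]
    simp only [Matrix.mul_assoc]
  have hW : (U * W₀ * Uᴴ)ᴴ = U * W₀ᴴ * Uᴴ := by
    simp only [Matrix.conjTranspose_mul, Matrix.conjTranspose_conjTranspose, Matrix.mul_assoc]
  rw [hW] at hρS
  rw [ptrace_sum_aux] at hωS
  rw [hX]
  simp only [Matrix.mul_add, Matrix.mul_sub, Matrix.add_mul, Matrix.sub_mul, Matrix.trace_add,
    Matrix.trace_sub, Matrix.mul_sum, Matrix.sum_mul, Matrix.trace_sum, key]
  rw [← hρS, hωS]
  simp only [Matrix.mul_sum, Matrix.sum_mul, Matrix.trace_sum]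
  rw [Finset.sum_comm]
  ring
end

section
/- Let G be a finite group of order n, let D be a finite-dimensional complex representation of G with character χ_D, and let ρ : G → GL_m(ℂ) be a group homomorphism whose associated representation of G on ℂ^m is irreducible, with character χ_ρ(g) = Tr ρ(g). Let k = (1/n)·Σ_{g∈G} χ_D(g)·χ_ρ(g⁻¹) (the multiplicity of ρ in D). Then for all 1 ≤ i, j ≤ m, the vector U_{ij} ∈ ℂ^G with entries (U_{ij})_g = ρ(g⁻¹)_{ij} is an eigenvector of M^{χ_D} with eigenvalue n·k/m: for all g ∈ G, Σ_{h∈G} χ_D(g⁻¹h)·ρ(h⁻¹)_{ij} = (n·k/m)·ρ(g⁻¹)_{ij}. -/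
open Matrix FDRep

/-- The representation of a group `G` on `ℂ^m` associated to `ρ : G →* GL_m(ℂ)` is
irreducible: `ℂ^m` is nonzero and its only `G`-invariant subspaces are `⊥` and `⊤`. -/
def MatRep.Irreducible {G : Type} [Group G] {m : ℕ}
    (ρ : G →* Matrix.GeneralLinearGroup (Fin m) ℂ) : Prop :=
  0 < m ∧ ∀ p : Submodule ℂ (Fin m → ℂ),
    (∀ g : G, ∀ x ∈ p, ((ρ g : Matrix (Fin m) (Fin m) ℂ)).mulVec x ∈ p) → p = ⊥ ∨ p = ⊤

theorem charMatrix_eigenvector_multiplicity {G : Type} [Group G] [Fintype G] {m : ℕ}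
    (D : FDRep ℂ G)
    (ρ : G →* Matrix.GeneralLinearGroup (Fin m) ℂ) (hρ : MatRep.Irreducible ρ)
    (k : ℂ)
    (hk : k = (Fintype.card G : ℂ)⁻¹
        * ∑ g : G, D.character g * ((ρ (g⁻¹) : Matrix (Fin m) (Fin m) ℂ)).trace) :
    ∀ (g : G) (i j : Fin m),
      ∑ h : G, D.character (g⁻¹ * h) * (ρ (h⁻¹) : Matrix (Fin m) (Fin m) ℂ) i j
        = ((Fintype.card G : ℂ) * k / (m : ℂ)) * (ρ (g⁻¹) : Matrix (Fin m) (Fin m) ℂ) i j := by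
  obtain ⟨hm, hirr⟩ := hρ
  set R : G → Matrix (Fin m) (Fin m) ℂ := fun g => (ρ g : Matrix (Fin m) (Fin m) ℂ) with hR
  have hmul : ∀ a b, R (a * b) = R a * R b := fun a b => by simp [hR]
  set A : Matrix (Fin m) (Fin m) ℂ := ∑ u : G, D.character u • R u⁻¹ with hA
  have hcomm : ∀ g, A * R g = R g * A := by
    intro g
    rw [hA, Finset.sum_mul, Finset.mul_sum]
    refine Fintype.sum_equiv (MulAut.conj g⁻¹).toEquiv _ _ (fun u => ?_)
    have e : (MulAut.conj g⁻¹).toEquiv u = g⁻¹ * u * g⁻¹⁻¹ := rfl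
    rw [e, FDRep.char_conj, smul_mul_assoc, mul_smul_comm, ← hmul, ← hmul]
    congr 2
    group
  haveI : Nonempty (Fin m) := ⟨⟨0, hm⟩⟩
  obtain ⟨c, hc⟩ := Module.End.exists_eigenvalue (Matrix.toLin' A)
  have htop : Module.End.eigenspace (Matrix.toLin' A) c = ⊤ := by
    refine (hirr _ ?_).resolve_left hc
    intro g x hx
    rw [Module.End.mem_eigenspace_iff, Matrix.toLin'_apply] at hx ⊢
    change A.mulVec ((R g).mulVec x) = c • (R g).mulVec x
    rw [Matrix.mulVec_mulVec, hcomm, ← Matrix.mulVec_mulVec, hx, Matrix.mulVec_smul]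
  have hAc : A = c • (1 : Matrix (Fin m) (Fin m) ℂ) := by
    apply Matrix.toLin'.injective
    ext1 x
    ext1
    have hx : Pi.single x (1 : ℂ) ∈ Module.End.eigenspace (Matrix.toLin' A) c := by
      rw [htop]; trivial
    rw [Module.End.mem_eigenspace_iff] at hx
    simp only [LinearMap.comp_apply, LinearMap.single_apply]
    rw [hx]
    simp
  have hm0 : (m : ℂ) ≠ 0 := by exact_mod_cast hm.ne'
  have hn0 : (Fintype.card G : ℂ) ≠ 0 := by exact_mod_cast Fintype.card_ne_zero
  have htr : c * m = (Fintype.card G : ℂ) * k := by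
    have h1 : A.trace = c * m := by rw [hAc]; simp
    rw [hk, mul_inv_cancel_left₀ hn0, ← h1, hA, Matrix.trace_sum]
    simp [hR, Matrix.trace_smul]
  intro g i j
  rw [← htr, mul_div_cancel_right₀ _ hm0]
  have h2 : A * R g⁻¹ = c • R g⁻¹ := by rw [hAc]; simp
  have h3 := congrFun (congrFun h2 i) j
  rw [Matrix.smul_apply, smul_eq_mul] at h3
  change _ = c * R g⁻¹ i j
  rw [← h3, hA, Finset.sum_mul, Matrix.sum_apply]
  symm
  refine Fintype.sum_equiv (Equiv.mulLeft g) _ _ (fun u => ?_)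
  rw [smul_mul_assoc, ← hmul, Matrix.smul_apply, smul_eq_mul]
  simp [hR]
end

section
/- Let G be a finite group of order n and let D be a finite-dimensional complex representation of G with character χ_D. Then the matrix M^{χ_D} is invertible if and only if for every finite-dimensional irreducible complex representation W of G with character χ_W, the multiplicity (1/n)·Σ_{g∈G} χ_D(g)·χ_W(g⁻¹) is nonzero. -/
open FDRep CategoryTheory

/-- For a representation with character `χ`, the matrix `M^χ` indexed by the group elements,
with entries `(M^χ)_{g,h} = χ(g⁻¹ h)`. -/
noncomputable def charMatrix {G : Type} [Group G] [Fintype G] (V : FDRep ℂ G) : Matrix G G ℂ :=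
  Matrix.of fun g h => V.character (g⁻¹ * h)

section Helpers

open Representation
open scoped MonoidAlgebra

variable {G : Type} [Group G] [Fintype G]

/-- A vector is in the kernel of the character matrix iff the corresponding element of the group
algebra acts by zero. -/
theorem aux_asAlgebraHom_eq_zero (D : FDRep ℂ G) (a : ℂ[G])
    (h : ∀ b : ℂ[G], LinearMap.trace ℂ D (asAlgebraHom D.ρ (b * a)) = 0) :
    asAlgebraHom D.ρ a = 0 := by
  obtain ⟨e, he, hI⟩ := IsSemisimpleRing.ideal_eq_span_idempotent (Ideal.span {a})
  have h1 : e ∈ Ideal.span {a} := hI ▸ Ideal.mem_span_singleton_self e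
  have h2 : a ∈ Ideal.span {e} := hI ▸ Ideal.mem_span_singleton_self a
  obtain ⟨b, hb⟩ := Ideal.mem_span_singleton'.1 h1
  obtain ⟨c, hc⟩ := Ideal.mem_span_singleton'.1 h2
  have h3 := h b
  rw [hb] at h3
  have h4 : IsIdempotentElem (asAlgebraHom D.ρ e) := he.map _
  rw [LinearMap.IsIdempotentElem.trace_eq_zero_iff h4] at h3
  rw [← hc, map_mul, h3, mul_zero]

theorem aux_trace (D : FDRep ℂ G) (v : G → ℂ) (g : G) :
    (charMatrix D).mulVec v g = LinearMap.trace ℂ D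
      (asAlgebraHom D.ρ (MonoidAlgebra.single g⁻¹ 1 * ∑ h, MonoidAlgebra.single h (v h))) := by
  simp [Matrix.mulVec, dotProduct, charMatrix, Finset.mul_sum, MonoidAlgebra.single_mul_single,
    FDRep.character, mul_comm]

theorem aux_coeff (v : G → ℂ) (h : (∑ h, MonoidAlgebra.single h (v h) : ℂ[G]) = 0) : v = 0 := by
  classical
  ext g
  have := congrArg (fun x : ℂ[G] => x.coeff g) h
  simpa [Finsupp.single_apply] using this

theorem aux_sum (a : ℂ[G]) : a = ∑ h, MonoidAlgebra.single h (a.coeff h) := by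
  classical
  ext g
  simp [Finsupp.single_apply]

/-- The character matrix is invertible iff the group algebra acts faithfully. -/
theorem aux_isUnit_iff [DecidableEq G] (D : FDRep ℂ G) :
    IsUnit (charMatrix D).det ↔ ∀ a : ℂ[G], asAlgebraHom D.ρ a = 0 → a = 0 := by
  rw [← Matrix.isUnit_iff_isUnit_det, ← Matrix.mulVec_injective_iff_isUnit]
  constructor
  · intro hinj a ha
    have : a.coeff = (0 : G → ℂ) := by
      apply hinj
      ext g
      rw [aux_trace, ← aux_sum, map_mul, ha]
      simp
    rw [aux_sum a]
    simp [this]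
  · intro hf
    have key : ∀ v : G → ℂ, (charMatrix D).mulVec v = 0 → v = 0 := by
      intro v hv
      apply aux_coeff
      apply hf
      apply aux_asAlgebraHom_eq_zero
      intro b
      rw [aux_sum b, Finset.sum_mul, map_sum, map_sum]
      apply Finset.sum_eq_zero
      intro g _
      have h1 := congrFun hv g⁻¹
      rw [aux_trace, inv_inv] at h1
      have : (MonoidAlgebra.single g (b.coeff g) : ℂ[G])
          = b.coeff g • MonoidAlgebra.single g 1 := by simp
      rw [this, smul_mul_assoc, map_smul, map_smul, h1]
      simp
    intro v w hvw
    have := key (v - w) (by rw [Matrix.mulVec_sub]; exact sub_eq_zero.2 hvw)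
    exact sub_eq_zero.1 this

theorem aux_mult (D W : FDRep ℂ G) :
    (Fintype.card G : ℂ)⁻¹ * ∑ g : G, D.character g * W.character (g⁻¹) =
      Module.finrank ℂ (IntertwiningMap W.ρ D.ρ) := by
  have : Invertible (Nat.card G : ℂ) := invertibleOfNonzero (by simp)
  rw [Fintype.card_eq_nat_card]
  exact card_inv_mul_sum_char_mul_char_eq_finrank W.ρ D.ρ

theorem aux_forward (D W : FDRep ℂ G) (hW : Simple W)
    (hf : ∀ a : ℂ[G], asAlgebraHom D.ρ a = 0 → a = 0) :
    ∃ f : IntertwiningMap W.ρ D.ρ, f ≠ 0 := by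
  have hnt : ∃ w : asModule W.ρ, w ≠ 0 := by
    by_contra! hcon
    apply id_nonzero W
    ext x
    exact hcon _
  obtain ⟨w, hw⟩ := hnt
  have : Module.Projective ℂ[G] (asModule W.ρ) := Module.projective_of_isSemisimpleRing _ _
  obtain ⟨s, hs⟩ := Module.projective_def'.1 this
  have h1 : s w ≠ 0 := by
    intro h0
    apply hw
    have := LinearMap.congr_fun hs w
    simpa [h0] using this.symm
  obtain ⟨x, hx⟩ := Finsupp.ne_iff.1 h1
  have h2 : ∃ d : asModule D.ρ, s w x • d ≠ 0 := by
    by_contra! hcon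
    apply hx
    apply hf
    ext d
    exact hcon d
  obtain ⟨d, hd⟩ := h2
  let F : asModule W.ρ →ₗ[ℂ[G]] asModule D.ρ :=
    (LinearMap.toSpanSingleton ℂ[G] _ d) ∘ₗ (Finsupp.lapply x) ∘ₗ s
  refine ⟨(IntertwiningMap.equivLinearMapAsModule W.ρ D.ρ).symm F, ?_⟩
  rw [Ne, LinearEquiv.map_eq_zero_iff]
  intro h0
  exact hd (LinearMap.congr_fun h0 w)

theorem aux_ofModule_smul (M : Type) [AddCommGroup M] [Module ℂ M] [Module ℂ[G] M]
    [IsScalarTower ℂ ℂ[G] M] (r : ℂ[G]) (m : M) :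
    asAlgebraHom (ofModule' (k := ℂ) (G := G) M) r m = r • m := by
  simp [asAlgebraHom, ofModule']

/-- The `ℂ[G]`-module attached to `ofModule' M` is `M`. -/
noncomputable def auxEquiv (M : Type) [AddCommGroup M] [Module ℂ M] [Module ℂ[G] M]
    [IsScalarTower ℂ ℂ[G] M] : asModule (ofModule' (k := ℂ) (G := G) M) ≃ₗ[ℂ[G]] M where
  toAddEquiv := (asModuleEquiv (ofModule' (k := ℂ) (G := G) M)).toAddEquiv
  map_smul' r m := aux_ofModule_smul M r _

theorem aux_simple (D : FDRep ℂ G)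
    (h : ∀ W : FDRep ℂ G, Simple W → Module.finrank ℂ (IntertwiningMap W.ρ D.ρ) ≠ 0)
    (a : ℂ[G]) (ha : asAlgebraHom D.ρ a = 0) (M : Type) [AddCommGroup M] [Module ℂ M]
    [Module ℂ[G] M] [IsScalarTower ℂ ℂ[G] M] [Module.Finite ℂ M]
    (hM : IsSimpleModule ℂ[G] M) (s : M) : a • s = 0 := by
  let σ : Representation ℂ G M := ofModule' (k := ℂ) (G := G) M
  have hirr : Representation.IsIrreducible σ :=
    (irreducible_iff_isSimpleModule_asModule σ).2 (IsSimpleModule.congr (auxEquiv M))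
  have hinv : Invertible (Nat.card G : ℂ) := invertibleOfNonzero (by simp)
  have hsimple : Simple (FDRep.of σ) := by
    rw [FDRep.simple_iff_char_is_norm_one]
    have := Representation.char_orthonormal σ σ
    rw [if_pos ⟨Representation.Equiv.refl _⟩] at this
    rw [inv_mul_eq_iff_eq_mul₀ (by simp), mul_one] at this
    exact this
  have h1 : Module.finrank ℂ (IntertwiningMap σ D.ρ) ≠ 0 := h _ hsimple
  have : ∃ f : IntertwiningMap σ D.ρ, f ≠ 0 := by
    by_contra! hcon
    have : Subsingleton (IntertwiningMap σ D.ρ) :=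
      ⟨fun x y => by rw [hcon x, hcon y]⟩
    exact h1 Module.finrank_zero_of_subsingleton
  obtain ⟨f, hf⟩ := this
  have hinj := (Representation.IsIrreducible.injective_or_eq_zero f).resolve_right hf
  let F := IntertwiningMap.equivLinearMapAsModule _ _ f
  let s' : asModule σ := (auxEquiv M).symm s
  have h2 : F (a • s') = F 0 := by
    rw [map_smul, map_zero]
    exact LinearMap.congr_fun ha (F s')
  have h3 : a • s' = 0 := hinj h2
  have h4 := congrArg (auxEquiv M) h3
  rw [map_smul, map_zero] at h4
  simpa [s'] using h4

theorem aux_backward (D : FDRep ℂ G)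
    (h : ∀ W : FDRep ℂ G, Simple W → Module.finrank ℂ (IntertwiningMap W.ρ D.ρ) ≠ 0)
    (a : ℂ[G]) (ha : asAlgebraHom D.ρ a = 0) : a = 0 := by
  have h5 : a ∈ Submodule.annihilator (⊤ : Submodule ℂ[G] ℂ[G]) := by
    rw [← IsSemisimpleModule.sSup_simples_eq_top, sSup_eq_iSup', Submodule.annihilator_iSup,
      Submodule.mem_iInf]
    rintro ⟨S, hS⟩
    rw [Submodule.mem_annihilator]
    intro n hn
    exact congrArg Subtype.val (aux_simple D h a ha S hS ⟨n, hn⟩)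
  simpa using Submodule.mem_annihilator.1 h5 1 trivial

end Helpers

theorem charMatrix_invertible_iff {G : Type} [Group G] [Fintype G] [DecidableEq G]
    (D : FDRep ℂ G) :
    IsUnit (charMatrix D).det ↔
      ∀ W : FDRep ℂ G, Simple W →
        (Fintype.card G : ℂ)⁻¹ * ∑ g : G, D.character g * W.character (g⁻¹) ≠ 0 := by
  rw [aux_isUnit_iff]
  constructor
  · intro hf W hW
    rw [aux_mult, Nat.cast_ne_zero]
    obtain ⟨f, hf0⟩ := aux_forward D W hW hf
    have : FiniteDimensional ℂ (Representation.IntertwiningMap W.ρ D.ρ) :=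
      Module.Finite.equiv (Representation.invariantsEquivIntertwiningMap W.ρ D.ρ)
    have : Nontrivial (Representation.IntertwiningMap W.ρ D.ρ) := ⟨f, 0, hf0⟩
    exact Module.finrank_pos.ne'
  · intro h
    apply aux_backward
    intro W hW
    have := h W hW
    rwa [aux_mult, Nat.cast_ne_zero] at this
end

section
/- Let G be a finite group of order n, let D be a finite-dimensional complex representation of G with character χ_D, and let V₁,…,V_r be pairwise non-isomorphic finite-dimensional irreducible complex representations of G, with characters χ₁,…,χ_r and dimensions d₁,…,d_r, such that every finite-dimensional irreducible complex representation of G is isomorphic to some V_i. Let k_i = (1/n)·Σ_{g∈G} χ_D(g)·χ_i(g⁻¹) be the multiplicity of V_i in D. Then det M^{χ_D} = ∏_{i=1}^r (k_i·n/d_i)^{d_i²}. -/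
open FDRep CategoryTheory

lemma schur_scalar {G V : Type} [Group G] [Fintype G] [AddCommGroup V] [Module ℂ V]
    [FiniteDimensional ℂ V] (ρ : Representation ℂ G V)
    (h1 : Module.finrank ℂ (Representation.IntertwiningMap ρ ρ) = 1)
    (f : G → ℂ) (hf : ∀ g h, f (h * g * h⁻¹) = f g) :
    (Module.finrank ℂ V : ℂ) ≠ 0 ∧
    ∑ g, f g • ρ g = ((∑ g, f g * ρ.character g) / (Module.finrank ℂ V : ℂ)) • 1 := by
  have hV : Module.finrank ℂ V ≠ 0 := by
    intro h0
    have : Subsingleton V := Module.finrank_zero_iff.mp h0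
    have : Subsingleton (Representation.IntertwiningMap ρ ρ) :=
      ⟨fun a b => by ext x; exact Subsingleton.elim _ _⟩
    rw [Module.finrank_zero_of_subsingleton] at h1
    exact zero_ne_one h1
  have hV' : (Module.finrank ℂ V : ℂ) ≠ 0 := by exact_mod_cast hV
  refine ⟨hV', ?_⟩
  have : Nontrivial V := Module.nontrivial_of_finrank_pos (Nat.pos_of_ne_zero hV)
  let T : Representation.IntertwiningMap ρ ρ :=
    ⟨∑ g, f g • ρ g, by
      intro g
      change (∑ x, f x • ρ x) * ρ g = ρ g * ∑ x, f x • ρ x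
      rw [Finset.sum_mul, Finset.mul_sum]
      refine Fintype.sum_equiv (MulAut.conj g⁻¹).toEquiv _ _ ?_
      intro x
      have := hf x g⁻¹
      simp only [inv_inv, mul_assoc] at this
      simp [← map_mul, this, mul_assoc]⟩
  let I : Representation.IntertwiningMap ρ ρ := ⟨LinearMap.id, by intro g; rfl⟩
  have hI : I ≠ 0 := by
    intro h
    obtain ⟨v, hv⟩ := exists_ne (0 : V)
    have := congrArg (fun F => F.toLinearMap v) h
    exact hv this
  obtain ⟨c, hc⟩ := (finrank_eq_one_iff_of_nonzero' I hI).mp h1 T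
  have hc' : c • (1 : V →ₗ[ℂ] V) = ∑ g, f g • ρ g :=
    congrArg (fun F => F.toLinearMap) hc
  have htr := congrArg (LinearMap.trace ℂ V) hc'
  simp only [map_smul, LinearMap.trace_one, map_sum, smul_eq_mul] at htr
  rw [← hc']
  congr 1
  rw [eq_div_iff hV', htr]
  rfl

lemma simple_finrank {G : Type} [Group G] [Fintype G] (W : FDRep ℂ G) :
    Simple W ↔ Module.finrank ℂ (Representation.IntertwiningMap W.ρ W.ρ) = 1 := by
  have := invertibleOfNonzero (NeZero.ne (Nat.card G : ℂ))
  rw [FDRep.simple_iff_char_is_norm_one]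
  have h := Representation.card_inv_mul_sum_char_mul_char_eq_finrank W.ρ W.ρ
  rw [← Nat.cast_inj (R := ℂ), ← h]
  change _ ↔ (Nat.card G : ℂ)⁻¹ * ∑ g : G, W.character g * W.character g⁻¹ = _
  rw [Nat.cast_one, inv_mul_eq_one₀ (NeZero.ne _), eq_comm]

lemma simple_dim_ne_zero {G : Type} [Group G] [Fintype G] (W : FDRep ℂ G) (hW : Simple W) :
    (Module.finrank ℂ W : ℂ) ≠ 0 :=
  (schur_scalar W.ρ ((simple_finrank W).1 hW) 0 (by simp)).1

lemma charMatrix_mul {G : Type} [Group G] [Fintype G] (D W : FDRep ℂ G) (hW : Simple W) :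
    charMatrix D * charMatrix W =
      ((∑ g, D.character g * W.character g⁻¹) / (Module.finrank ℂ W : ℂ)) • charMatrix W := by
  have hS := (schur_scalar W.ρ ((simple_finrank W).1 hW) (fun g => D.character g⁻¹)
    (fun g h => by
      have := D.char_conj g⁻¹ h
      simpa [mul_assoc] using this)).2
  have hsum : ∑ g, D.character g⁻¹ * Representation.character W.ρ g
      = ∑ g, D.character g * W.character g⁻¹ := by
    refine Fintype.sum_equiv (Equiv.inv G) _ _ ?_
    intro x
    simp only [Equiv.inv_apply, inv_inv]
    rfl
  rw [hsum] at hS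
  ext g k
  have h2 := congrArg (fun F => LinearMap.trace ℂ W (F * W.ρ (g⁻¹ * k))) hS
  simp only [Finset.sum_mul, map_sum, smul_mul_assoc, map_smul, one_mul, ← map_mul,
    smul_eq_mul] at h2
  simp only [charMatrix, Matrix.mul_apply, Matrix.of_apply, Matrix.smul_apply, smul_eq_mul]
  refine Eq.trans ?_ h2
  refine Fintype.sum_equiv ((Equiv.mulLeft g⁻¹).trans (Equiv.inv G)) _ _ ?_
  intro x
  have e1 : (x⁻¹ * g) * (g⁻¹ * k) = x⁻¹ * k := by group
  simp only [Equiv.trans_apply, Equiv.coe_mulLeft, Equiv.inv_apply, mul_inv_rev, inv_inv, e1]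
  rfl

lemma trace_charMatrix {G : Type} [Group G] [Fintype G] (W : FDRep ℂ G) :
    (charMatrix W).trace = Fintype.card G * Module.finrank ℂ W := by
  simp [charMatrix, Matrix.trace]

lemma det_one_add_idem {ι : Type} [Fintype ι] [DecidableEq ι] (P : Matrix ι ι ℂ)
    (hP : P * P = P) (m : ℕ) (hm : P.trace = m) (c : ℂ) :
    (1 + (c - 1) • P).det = c ^ m := by
  set f := Matrix.toLin' P with hf
  have hfi : IsIdempotentElem f := by
    rw [IsIdempotentElem, Module.End.mul_eq_comp, hf, ← Matrix.toLin'_mul, hP]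
  have hp := LinearMap.IsIdempotentElem.isProj_range f hfi
  have htr := hp.trace
  rw [hf, Matrix.trace_toLin'_eq, hm] at htr
  have htr : m = Module.finrank ℂ (LinearMap.range f) := by exact_mod_cast htr
  rw [← LinearMap.det_toLin', map_add, map_smul, ← hf, Matrix.toLin'_one]
  set p := LinearMap.range f
  set e := p.prodEquivOfIsCompl (LinearMap.ker f) hp.isCompl
  have : LinearMap.id + (c - 1) • f =
      e.conj (LinearMap.prodMap (c • LinearMap.id) LinearMap.id) := by
    have h1 := hp.eq_conj_prodMap
    have h2 : LinearMap.prodMap (c • LinearMap.id) LinearMap.id =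
      (LinearMap.id + (c-1) • LinearMap.prodMap LinearMap.id 0 : (p × LinearMap.ker f) →ₗ[ℂ] _) := by
      ext <;> simp
      ring
    rw [h2, map_add, map_smul, LinearEquiv.conj_id, ← h1]
  rw [this, LinearEquiv.conj_apply, LinearMap.comp_assoc, LinearMap.det_conj]
  rw [LinearMap.det_prodMap]
  simp [htr]

lemma det_sum_idem {ι κ : Type} [Fintype ι] [DecidableEq ι] [DecidableEq κ]
    (P : κ → Matrix ι ι ℂ)
    (hP : ∀ i, P i * P i = P i) (hO : ∀ i j, i ≠ j → P i * P j = 0)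
    (m : κ → ℕ) (hm : ∀ i, (P i).trace = m i) (c : κ → ℂ) (s : Finset κ) :
    (1 + ∑ i ∈ s, (c i - 1) • P i).det = ∏ i ∈ s, c i ^ m i := by
  induction s using Finset.induction_on with
  | empty => simp
  | insert a s ha ih =>
    rw [Finset.prod_insert ha, ← ih, ← det_one_add_idem (P a) (hP a) (m a) (hm a) (c a),
      ← Matrix.det_mul, Finset.sum_insert ha]
    congr 1
    have : P a * ∑ i ∈ s, (c i - 1) • P i = 0 := by
      rw [Finset.mul_sum]
      refine Finset.sum_eq_zero fun i hi => ?_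
      rw [mul_smul_comm, hO a i (by rintro rfl; exact ha hi), smul_zero]
    rw [add_mul, mul_add, mul_add, smul_mul_assoc, smul_mul_assoc, this]
    simp
    abel

lemma central_smul {G : Type} [Group G] [Fintype G]
    (r : ℕ) (V : Fin r → FDRep ℂ G)
    (hsimple : ∀ i, Simple (V i))
    (hpairwise : ∀ i j, i ≠ j → ¬ Nonempty (V i ≅ V j))
    (hcomplete : ∀ W : FDRep ℂ G, Simple W → ∃ i, Nonempty (W ≅ V i))
    (M : Type) [AddCommGroup M] [Module ℂ M] [Module (MonoidAlgebra ℂ G) M]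
    [IsScalarTower ℂ (MonoidAlgebra ℂ G) M]
    (hS : IsSimpleModule (MonoidAlgebra ℂ G) M) (n : M) :
    (∑ g : G, MonoidAlgebra.single g (∑ i, ((Module.finrank ℂ (V i) : ℂ) / Fintype.card G) *
      (V i).character g⁻¹) : MonoidAlgebra ℂ G) • n = n := by
  have hinv := invertibleOfNonzero (NeZero.ne (Nat.card G : ℂ))
  set f : G → ℂ := fun x =>
    ∑ i, ((Module.finrank ℂ (V i) : ℂ) / Fintype.card G) * (V i).character x⁻¹ with hf
  have hclass : ∀ g h, f (h * g * h⁻¹) = f g := by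
    intro g h
    simp only [hf]
    refine Finset.sum_congr rfl fun i _ => ?_
    have := (V i).char_conj g⁻¹ h
    rw [← this]
    congr 2
    group
  -- the central element
  set e : MonoidAlgebra ℂ G := ∑ g, MonoidAlgebra.single g (f g) with he
  have hfd : FiniteDimensional ℂ M := Module.Finite.trans (MonoidAlgebra ℂ G) _
  set ρ : Representation ℂ G M := Representation.ofModule' M with hρ
  have hact : ∀ (a : MonoidAlgebra ℂ G) (m : M), ρ.asAlgebraHom a m = a • m := by
    intro a m
    have : ρ.asAlgebraHom = Algebra.lsmul ℂ ℂ M :=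
      (MonoidAlgebra.lift ℂ (M →ₗ[ℂ] M) G).apply_symm_apply _
    rw [this]
    rfl
  have hirr : ρ.IsIrreducible := by
    rw [Representation.irreducible_iff_isSimpleModule_asModule]
    let φ : ρ.asModule ≃ₗ[MonoidAlgebra ℂ G] M :=
      { ρ.asModuleEquiv.toAddEquiv with
        map_smul' := fun a x => by
          have := ρ.asModuleEquiv_map_smul a x
          rw [hact] at this
          exact this }
    exact IsSimpleModule.congr φ
  have h1 := Representation.IsIrreducible.finrank_intertwiningMap_self ρ
  let W : FDRep ℂ G := FDRep.of ρ
  have hW : Simple W := (simple_finrank W).2 h1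
  have hch : ∀ g, W.character g = ρ.character g := fun g => rfl
  have hs := schur_scalar ρ h1 f hclass
  obtain ⟨j, ⟨φ⟩⟩ := hcomplete W hW
  have hWj := FDRep.char_iso φ
  have hdim : Module.finrank ℂ M =
      Module.finrank ℂ (V j) := (FDRep.isoToLinearEquiv φ).finrank_eq
  have hval : ∑ g, f g * ρ.character g = Module.finrank ℂ (V j) := by
    have h3 : ∀ i, (Fintype.card G : ℂ)⁻¹ * ∑ g, (V j).character g * (V i).character g⁻¹ =
        if i = j then 1 else 0 := by
      intro i
      have := hsimple i
      have := hsimple j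
      have h4 := FDRep.char_orthonormal (V j) (V i)
      rw [Nat.card_eq_fintype_card] at h4
      rw [h4]
      by_cases hij : i = j
      · subst hij
        simp [Nonempty.intro (Iso.refl (V i))]
      · simp only [hij, if_false, if_neg (hpairwise j i (Ne.symm hij))]
    calc ∑ g, f g * ρ.character g
        = ∑ i, (Module.finrank ℂ (V i) : ℂ) * ((Fintype.card G : ℂ)⁻¹ *
            ∑ g, (V j).character g * (V i).character g⁻¹) := by
          simp only [hf, Finset.sum_mul, Finset.mul_sum]
          rw [Finset.sum_comm]
          refine Finset.sum_congr rfl fun i _ => Finset.sum_congr rfl fun g _ => ?_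
          rw [← hch, hWj]
          ring
      _ = _ := by simp [h3]
  have hs2 := hs.2
  rw [hval, hdim, div_self (by rw [← hdim]; exact hs.1), one_smul] at hs2
  have halg : ρ.asAlgebraHom e = 1 := by
    rw [he, map_sum, ← hs2]
    simp [Representation.asAlgebraHom_single]
  rw [← hact, halg]
  rfl

lemma isIdem_complete {G : Type} [Group G] [Fintype G] [DecidableEq G]
    (r : ℕ) (V : Fin r → FDRep ℂ G)
    (hsimple : ∀ i, Simple (V i))
    (hpairwise : ∀ i j, i ≠ j → ¬ Nonempty (V i ≅ V j))
    (hcomplete : ∀ W : FDRep ℂ G, Simple W → ∃ i, Nonempty (W ≅ V i)) (x : G) :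
    ∑ i, ((Module.finrank ℂ (V i) : ℂ) / Fintype.card G) * (V i).character x⁻¹ =
      if x = 1 then 1 else 0 := by
  have hinv := invertibleOfNonzero (NeZero.ne (Nat.card G : ℂ))
  set f : G → ℂ := fun x =>
    ∑ i, ((Module.finrank ℂ (V i) : ℂ) / Fintype.card G) * (V i).character x⁻¹ with hf
  -- the central element
  set e : MonoidAlgebra ℂ G := ∑ g, MonoidAlgebra.single g (f g) with he
  have key : ∀ S : Submodule (MonoidAlgebra ℂ G) (MonoidAlgebra ℂ G),
      IsSimpleModule (MonoidAlgebra ℂ G) S → e - 1 ∈ S.annihilator := by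
    intro S hS
    rw [Submodule.mem_annihilator]
    intro n hn
    have h6 : e • (⟨n, hn⟩ : S) = ⟨n, hn⟩ := central_smul r V hsimple hpairwise hcomplete S hS _
    have h7 : e • n = n := congrArg Subtype.val h6
    rw [sub_smul, one_smul, h7, sub_self]
  have htop : e - 1 ∈ (⊤ : Submodule (MonoidAlgebra ℂ G) (MonoidAlgebra ℂ G)).annihilator := by
    have : NeZero (Nat.card G : ℂ) := inferInstance
    rw [← IsSemisimpleModule.sSup_simples_eq_top, sSup_eq_iSup', Submodule.annihilator_iSup]
    rw [Submodule.mem_iInf]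
    intro S
    exact key S.1 S.2
  have he1 : e = 1 := by
    have := (Submodule.mem_annihilator.1 htop) 1 trivial
    rw [smul_eq_mul, mul_one] at this
    exact sub_eq_zero.1 this
  have hx := congrArg (fun a : MonoidAlgebra ℂ G => a.coeff x) he1
  simp [he, MonoidAlgebra.one_def, Finsupp.single_apply] at hx
  change f x = _
  rw [hx]
  simp only [eq_comm]

theorem det_charMatrix {G : Type} [Group G] [Fintype G] [DecidableEq G]
    (D : FDRep ℂ G)
    (r : ℕ) (V : Fin r → FDRep ℂ G)
    (hsimple : ∀ i, Simple (V i))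
    (hpairwise : ∀ i j, i ≠ j → ¬ Nonempty (V i ≅ V j))
    (hcomplete : ∀ W : FDRep ℂ G, Simple W → ∃ i, Nonempty (W ≅ V i))
    (k : Fin r → ℂ)
    (hk : ∀ i, k i = (Fintype.card G : ℂ)⁻¹ * ∑ g : G, D.character g * (V i).character (g⁻¹)) :
    (charMatrix D).det
      = ∏ i : Fin r,
          (k i * (Fintype.card G : ℂ) / (Module.finrank ℂ (V i) : ℂ))
            ^ ((Module.finrank ℂ (V i)) ^ 2) := by
  have hinv := invertibleOfNonzero (NeZero.ne (Nat.card G : ℂ))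
  have hn : (Fintype.card G : ℂ) ≠ 0 := by
    simp [Fintype.card_ne_zero]
  have hd : ∀ i, (Module.finrank ℂ (V i) : ℂ) ≠ 0 := fun i => simple_dim_ne_zero _ (hsimple i)
  set P : Fin r → Matrix G G ℂ := fun i =>
    ((Module.finrank ℂ (V i) : ℂ) / Fintype.card G) • charMatrix (V i) with hPdef
  have horth : ∀ i j, ∑ g, (V i).character g * (V j).character g⁻¹ =
      if i = j then (Fintype.card G : ℂ) else 0 := by
    intro i j
    have := hsimple i
    have := hsimple j
    have h4 := FDRep.char_orthonormal (V i) (V j)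
    rw [Nat.card_eq_fintype_card, inv_mul_eq_iff_eq_mul₀ hn] at h4
    rw [h4]
    by_cases hij : i = j
    · subst hij
      simp [Nonempty.intro (Iso.refl (V i))]
    · simp only [hij, if_false, if_neg (hpairwise i j hij), mul_zero]
  have hsum : ∑ i, P i = 1 := by
    ext g h
    have := isIdem_complete r V hsimple hpairwise hcomplete (g⁻¹ * h)⁻¹
    simp only [inv_inv, inv_eq_one, inv_mul_eq_one] at this
    simp only [hPdef, Matrix.sum_apply, Matrix.smul_apply, charMatrix, Matrix.of_apply,
      smul_eq_mul, this, Matrix.one_apply]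
  have hP : ∀ i, P i * P i = P i := by
    intro i
    simp only [hPdef, smul_mul_assoc, mul_smul_comm, charMatrix_mul _ _ (hsimple i), horth,
      if_true, smul_smul]
    congr 1
    field_simp [hd i]
  have hO : ∀ i j, i ≠ j → P i * P j = 0 := by
    intro i j hij
    simp [hPdef, smul_mul_assoc, mul_smul_comm, charMatrix_mul _ _ (hsimple j), horth, hij]
  have hm : ∀ i, (P i).trace = ((Module.finrank ℂ (V i) ^ 2 : ℕ) : ℂ) := by
    intro i
    simp only [hPdef, Matrix.trace_smul, trace_charMatrix, smul_eq_mul]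
    push_cast
    field_simp
  have hDP : ∀ i, charMatrix D * P i =
      (k i * (Fintype.card G : ℂ) / (Module.finrank ℂ (V i) : ℂ)) • P i := by
    intro i
    simp only [hPdef, mul_smul_comm, charMatrix_mul _ _ (hsimple i), hk i, smul_smul]
    congr 1
    field_simp
  rw [← det_sum_idem P hP hO _ hm]
  congr 1
  simp only [sub_smul, one_smul, Finset.sum_sub_distrib, hsum, ← hDP, ← Finset.mul_sum]
  simp
end

section
/- Let d be a natural number and let D be the permutation-of-factors representation of S₄ on ℂ^{({1,2,3,4}→{1,…,d})} ≅ (ℂ^d)^{⊗4}, defined by D(π)e_f = e_{f∘π⁻¹}. Then: (1) the dimension of the space of S₄-equivariant linear maps from the trivial representation to D equals d(d+1)(d+2)(d+3)/24; (2) the dimension of the space of S₄-equivariant linear maps from the sign representation to D equals d(d−1)(d−2)(d−3)/24; (3) for every 2-dimensional irreducible complex representation W of S₄, the dimension of the space of S₄-equivariant linear maps from W to D equals d²(d²−1)/12; (4) the dimension of the space of S₄-equivariant linear maps from the standard representation of S₄ to D equals d(d²−1)(d+2)/8; and (5) the dimension of the space of S₄-equivariant linear maps from the tensor product of the standard representation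 with the sign representation to D equals d(d²−1)(d−2)/8. -/
open Matrix

/-- The submodule of `G`-equivariant linear maps between two spaces carrying
`G`-actions by linear maps. -/
def equivariantHoms {G : Type*} (V W : Type*)
    [AddCommGroup V] [Module ℂ V] [AddCommGroup W] [Module ℂ W]
    (ρV : G → V →ₗ[ℂ] V) (ρW : G → W →ₗ[ℂ] W) : Submodule ℂ (V →ₗ[ℂ] W) where
  carrier := { T | ∀ g : G, T ∘ₗ ρV g = ρW g ∘ₗ T }
  add_mem' := by
    intro a b ha hb g
    rw [LinearMap.add_comp, LinearMap.comp_add, ha g, hb g]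
  zero_mem' := by
    intro g
    rw [LinearMap.zero_comp, LinearMap.comp_zero]
  smul_mem' := by
    intro c T hT g
    rw [LinearMap.smul_comp, LinearMap.comp_smul, hT g]

/-- The permutation-of-factors representation of `S_n` on `ℂ^{({1,…,n} → {1,…,d})}`,
with `D(π) e_f = e_{f ∘ π⁻¹}`, i.e. `(D(π) φ) g = φ (g ∘ π)`. -/
def Dact (n d : ℕ) (π : Equiv.Perm (Fin n)) :
    ((Fin n → Fin d) → ℂ) →ₗ[ℂ] ((Fin n → Fin d) → ℂ) where
  toFun φ := fun g => φ (g ∘ π)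
  map_add' _ _ := rfl
  map_smul' _ _ := rfl

/-- The subspace `{x ∈ ℂ^n : ∑ i, x i = 0}` underlying the standard representation. -/
noncomputable def sumZero (n : ℕ) : Submodule ℂ (Fin n → ℂ) where
  carrier := { x | ∑ i, x i = 0 }
  add_mem' := by
    intro a b ha hb
    simp only [Set.mem_setOf_eq, Pi.add_apply, Finset.sum_add_distrib] at *
    rw [ha, hb, add_zero]
  zero_mem' := by simp
  smul_mem' := by
    intro c x hx
    simp only [Set.mem_setOf_eq, Pi.smul_apply, smul_eq_mul, ← Finset.mul_sum] at *
    rw [hx, mul_zero]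

/-- The standard representation of `S_n` on `{x : ∑ i, x i = 0}`, with
`(π · x)_i = x_{π⁻¹(i)}`. -/
noncomputable def stdAct (n : ℕ) (π : Equiv.Perm (Fin n)) : (sumZero n) →ₗ[ℂ] (sumZero n) where
  toFun x := ⟨fun i => x.1 (π⁻¹ i), (Equiv.sum_comp (π⁻¹ : Equiv.Perm (Fin n)) x.1).trans x.2⟩
  map_add' _ _ := rfl
  map_smul' _ _ := rfl

abbrev S4 := Equiv.Perm (Fin 4)

/-- Representatives of the conjugacy classes of `S₄`. -/
def rT : S4 := Equiv.swap 0 1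
def rV : S4 := Equiv.swap 0 1 * Equiv.swap 2 3
def rC : S4 := Equiv.swap 0 1 * Equiv.swap 1 2
def rQ : S4 := Equiv.swap 0 1 * Equiv.swap 1 2 * Equiv.swap 2 3

/-- The chosen representative of the class of `g`. -/
def clsRep (g : S4) : S4 :=
  if g = 1 then 1 else if g * g * g = 1 then rC else
  if g * g = 1 then (if Equiv.Perm.sign g = 1 then rV else rT) else rQ

set_option maxRecDepth 100000 in
lemma clsRep_conj : ∀ g : S4, ∃ h : S4, g = h * clsRep g * h⁻¹ := by decide +kernel

set_option maxRecDepth 100000 in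
lemma clsRep_map : (Finset.univ : Finset S4).val.map clsRep =
    Multiset.replicate 1 1 + Multiset.replicate 6 rT + Multiset.replicate 3 rV
     + Multiset.replicate 8 rC + Multiset.replicate 6 rQ := by decide +kernel

lemma class_sum (f : S4 → ℂ) (hf : ∀ g h : S4, f (h * g * h⁻¹) = f g) :
    ∑ g, f g = f 1 + 6 * f rT + 3 * f rV + 8 * f rC + 6 * f rQ := by
  have h1 : ∀ g, f g = f (clsRep g) := fun g => by
    obtain ⟨h, hh⟩ := clsRep_conj g
    conv_lhs => rw [hh]
    exact hf _ _
  rw [Finset.sum_congr rfl (fun g _ => h1 g)]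
  have : ∑ g, f (clsRep g) = (((Finset.univ : Finset S4).val.map clsRep).map f).sum := by
    rw [Multiset.map_map]; rfl
  rw [this, clsRep_map]
  simp only [Multiset.map_add, Multiset.sum_add, Multiset.map_replicate, Multiset.sum_replicate,
    nsmul_eq_mul]
  push_cast; ring

lemma rC_inv : ∃ h : S4, rC⁻¹ = h * rC * h⁻¹ := by decide +kernel
lemma rQ_inv : ∃ h : S4, rQ⁻¹ = h * rQ * h⁻¹ := by decide +kernel
lemma rT_inv : rT⁻¹ = rT := by decide +kernel
lemma rV_inv : rV⁻¹ = rV := by decide +kernel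

lemma hom_dim {V W : Type*} [AddCommGroup V] [Module ℂ V] [AddCommGroup W] [Module ℂ W]
    [FiniteDimensional ℂ V] [FiniteDimensional ℂ W]
    (ρ : Representation ℂ S4 V) (σ : Representation ℂ S4 W) :
    (24 : ℂ) * (Module.finrank ℂ (equivariantHoms V W (fun g => ρ g) (fun g => σ g)) : ℂ) =
      ρ.character 1 * σ.character 1 + 6 * (ρ.character rT * σ.character rT)
      + 3 * (ρ.character rV * σ.character rV) + 8 * (ρ.character rC * σ.character rC)
      + 6 * (ρ.character rQ * σ.character rQ) := by
  have he : equivariantHoms V W (fun g => ρ g) (fun g => σ g)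
      = (Representation.linHom ρ σ).invariants := by
    ext T
    refine Iff.trans ?_ (((Representation.mem_linHom_invariants_iff_isIntertwining (ρ := ρ) (σ := σ)
      T).trans (Representation.isIntertwiningMap_iff ρ σ T)).symm)
    constructor
    · intro h g v
      exact LinearMap.congr_fun (h g) v
    · intro h g
      ext v
      exact h g v
  have hc : (Nat.card S4 : ℂ) = 24 := by
    have : Nat.card S4 = 24 := by
      rw [Nat.card_eq_fintype_card, Fintype.card_perm, Fintype.card_fin]; rfl
    rw [this]; norm_num
  have : Invertible (Nat.card S4 : ℂ) := invertibleOfNonzero (by rw [hc]; norm_num)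
  have h := Representation.card_inv_mul_sum_char_eq_finrank (Representation.linHom ρ σ)
  rw [he, ← h, hc, class_sum _ (fun g h => Representation.char_conj _ _ _)]
  simp only [Representation.char_linHom]
  obtain ⟨a, ha⟩ := rC_inv
  obtain ⟨b, hb⟩ := rQ_inv
  rw [ha, hb, Representation.char_conj, Representation.char_conj, rT_inv, rV_inv, inv_one]
  ring

/-- `Dact` as a representation. -/
def Drep (d : ℕ) : Representation ℂ S4 ((Fin 4 → Fin d) → ℂ) where
  toFun := Dact 4 d
  map_one' := rfl
  map_mul' _ _ := rfl

lemma Drep_apply (d : ℕ) (g : S4) : Drep d g = Dact 4 d g := rfl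

lemma Drep_char (d : ℕ) (g : S4) :
    (Drep d).character g = ∑ a : Fin d, ∑ b : Fin d, ∑ c : Fin d, ∑ e : Fin d,
      if ![a, b, c, e] ∘ g = ![a, b, c, e] then 1 else 0 := by
  have h1 : (Drep d).character g = ∑ f : Fin 4 → Fin d, if f ∘ g = f then (1 : ℂ) else 0 := by
    rw [Representation.character, LinearMap.trace_eq_matrix_trace ℂ (Pi.basisFun ℂ _),
      Matrix.trace]
    refine Finset.sum_congr rfl fun f _ => ?_
    simp [LinearMap.toMatrix_apply, Drep_apply, Dact, Pi.single_apply]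
  rw [h1, ← (Fin.consEquiv (fun _ : Fin 4 => Fin d)).sum_comp, Fintype.sum_prod_type]
  refine Finset.sum_congr rfl fun a _ => ?_
  rw [← (Fin.consEquiv (fun _ : Fin 3 => Fin d)).sum_comp, Fintype.sum_prod_type]
  refine Finset.sum_congr rfl fun b _ => ?_
  rw [← (Fin.consEquiv (fun _ : Fin 2 => Fin d)).sum_comp, Fintype.sum_prod_type]
  refine Finset.sum_congr rfl fun c _ => ?_
  rw [← (Fin.consEquiv (fun _ : Fin 1 => Fin d)).sum_comp, Fintype.sum_prod_type]
  refine Finset.sum_congr rfl fun e _ => ?_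
  rw [Fintype.sum_unique]
  have : (Fin.cons a (Fin.cons b (Fin.cons c (Fin.cons e (default : Fin 0 → Fin d)))))
     = ![a, b, c, e] := by ext i; fin_cases i <;> rfl
  simp only [Fin.consEquiv, Equiv.coe_fn_mk]
  rw [← this]
  congr

lemma D1 (d : ℕ) : (Drep d).character 1 = (d : ℂ) ^ 4 := by
  simp
lemma DT (d : ℕ) : (Drep d).character rT = (d : ℂ) ^ 3 := by
  rw [Drep_char]
  have : ∀ a b c e : Fin d, (![a, b, c, e] ∘ rT = ![a, b, c, e]) ↔ a = b := by
    intro a b c e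
    simp [funext_iff, Fin.forall_fin_succ, rT, Equiv.swap_apply_def]
    grind
  simp only [this]
  simp; ring
lemma DV (d : ℕ) : (Drep d).character rV = (d : ℂ) ^ 2 := by
  rw [Drep_char]
  have : ∀ a b c e : Fin d, (![a, b, c, e] ∘ rV = ![a, b, c, e]) ↔ a = b ∧ c = e := by
    intro a b c e
    simp [funext_iff, Fin.forall_fin_succ, rV, Equiv.swap_apply_def]
    grind
  simp only [this, ite_and]
  simp; ring
lemma DC (d : ℕ) : (Drep d).character rC = (d : ℂ) ^ 2 := by
  rw [Drep_char]
  have : ∀ a b c e : Fin d, (![a, b, c, e] ∘ rC = ![a, b, c, e]) ↔ a = b ∧ b = c := by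
    intro a b c e
    simp [funext_iff, Fin.forall_fin_succ, rC, Equiv.swap_apply_def]
    grind
  simp only [this, ite_and]
  simp; ring
lemma DQ (d : ℕ) : (Drep d).character rQ = (d : ℂ) := by
  rw [Drep_char]
  have : ∀ a b c e : Fin d, (![a, b, c, e] ∘ rQ = ![a, b, c, e]) ↔ a = b ∧ b = c ∧ c = e := by
    intro a b c e
    simp [funext_iff, Fin.forall_fin_succ, rQ, Equiv.swap_apply_def]
    grind
  simp only [this, ite_and]
  simp

/-- The standard representation. -/
noncomputable def stdRep : Representation ℂ S4 (sumZero 4) where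
  toFun := stdAct 4
  map_one' := rfl
  map_mul' _ _ := rfl

lemma stdRep_apply (g : S4) : stdRep g = stdAct 4 g := rfl

/-- Coordinates on the standard representation. -/
noncomputable def stdEquiv : sumZero 4 ≃ₗ[ℂ] (Fin 3 → ℂ) where
  toFun x := ![x.1 0, x.1 1, x.1 2]
  map_add' x y := by ext i; fin_cases i <;> rfl
  map_smul' c x := by ext i; fin_cases i <;> rfl
  invFun y := ⟨![y 0, y 1, y 2, -(y 0 + y 1 + y 2)], by
    simp [sumZero, Fin.sum_univ_four]⟩
  left_inv x := by
    have hx : ∑ i, x.1 i = 0 := x.2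
    rw [Fin.sum_univ_four] at hx
    ext i; fin_cases i <;> simp
    linear_combination -hx
  right_inv y := by ext i; fin_cases i <;> rfl

lemma std_finrank : Module.finrank ℂ (sumZero 4) = 3 := by
  rw [stdEquiv.finrank_eq]; simp

lemma std_char (g : S4) : stdRep.character g =
    ∑ i, stdEquiv (stdAct 4 g (stdEquiv.symm (Pi.single i 1))) i := by
  rw [Representation.character, LinearMap.trace_eq_matrix_trace ℂ (Module.Basis.ofEquivFun stdEquiv),
    Matrix.trace]
  refine Finset.sum_congr rfl fun f _ => ?_
  simp [LinearMap.toMatrix_apply, stdRep_apply]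

lemma std1 : stdRep.character 1 = 3 := by
  rw [Representation.char_one, std_finrank]; norm_num
lemma stdT : stdRep.character rT = 1 := by
  rw [std_char]
  simp [Fin.sum_univ_three, stdEquiv, stdAct, rT_inv, Pi.single_apply]
  simp [rT, Equiv.swap_apply_def]
lemma stdV : stdRep.character rV = -1 := by
  rw [std_char]
  simp [Fin.sum_univ_three, stdEquiv, stdAct, rV_inv, Pi.single_apply]
  simp [rV, Equiv.swap_apply_def]
lemma stdC : stdRep.character rC = 0 := by
  rw [std_char]
  simp [Fin.sum_univ_three, stdEquiv, stdAct, Pi.single_apply, rC, Equiv.swap_apply_def]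
lemma stdQ : stdRep.character rQ = -1 := by
  rw [std_char]
  simp [Fin.sum_univ_three, stdEquiv, stdAct, Pi.single_apply, rQ, Equiv.swap_apply_def]

/-- Twisting by the sign. -/
noncomputable def sgnTwist {V : Type*} [AddCommGroup V] [Module ℂ V]
    (ρ : Representation ℂ S4 V) : Representation ℂ S4 V where
  toFun g := ((Equiv.Perm.sign g : ℤ) : ℂ) • ρ g
  map_one' := by simp
  map_mul' g h := by
    ext v
    simp [smul_smul, mul_comm]

lemma sgnTwist_char {V : Type*} [AddCommGroup V] [Module ℂ V]
    (ρ : Representation ℂ S4 V) (g : S4) :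
    (sgnTwist ρ).character g = ((Equiv.Perm.sign g : ℤ) : ℂ) * ρ.character g := by
  simp [Representation.character, sgnTwist]

lemma sgnT : Equiv.Perm.sign rT = -1 := by decide +kernel
lemma sgnV : Equiv.Perm.sign rV = 1 := by decide +kernel
lemma sgnC : Equiv.Perm.sign rC = 1 := by decide +kernel
lemma sgnQ : Equiv.Perm.sign rQ = -1 := by decide +kernel

noncomputable def trivRep : Representation ℂ S4 ℂ where
  toFun _ := LinearMap.id
  map_one' := rfl
  map_mul' _ _ := rfl

lemma triv_char (g : S4) : trivRep.character g = 1 := by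
  simp [Representation.character, trivRep]

/-- A nonzero invariant subspace of the standard representation is everything. -/
lemma std_irred (p : Submodule ℂ (sumZero 4)) (hp : ∀ g, ∀ x ∈ p, stdAct 4 g x ∈ p)
    (hne : p ≠ ⊥) : p = ⊤ := by
  obtain ⟨x, hx, hx0⟩ := (Submodule.ne_bot_iff p).1 hne
  have hs : ∑ i, x.1 i = 0 := x.2
  -- two distinct coordinates
  obtain ⟨i, j, hij⟩ : ∃ i j, x.1 i ≠ x.1 j := by
    by_contra! h
    apply hx0
    ext k
    have : ∑ i, x.1 i = ∑ i : Fin 4, x.1 k := Finset.sum_congr rfl fun i _ => h i k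
    rw [hs] at this
    simpa using this.symm
  have hne' : i ≠ j := fun h => hij (by rw [h])
  have key : ∀ g : S4, ∀ y : sumZero 4, y.1 = Pi.single (g i) 1 - Pi.single (g j) 1 → y ∈ p := by
    intro g y hy
    have hz : stdAct 4 g ((x.1 i - x.1 j)⁻¹ • (x - stdAct 4 (Equiv.swap i j) x)) ∈ p :=
      hp _ _ (p.smul_mem _ (p.sub_mem hx (hp _ _ hx)))
    convert hz
    ext k
    obtain ⟨l, rfl⟩ := g.surjective k
    have h3 : x.1 i - x.1 j ≠ 0 := sub_ne_zero.2 hij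
    rw [hy]
    simp only [stdAct, LinearMap.coe_mk, AddHom.coe_mk, Submodule.coe_smul, Submodule.coe_sub,
      Pi.smul_apply, Pi.sub_apply, Pi.single_apply, smul_eq_mul, Equiv.swap_inv,
      Equiv.Perm.coe_inv, Equiv.symm_apply_apply, g.injective.eq_iff, Equiv.swap_apply_def]
    by_cases h1 : l = i
    · subst h1; simp [hne']; field_simp
    · by_cases h2 : l = j
      · subst h2; simp [h1]; field_simp; ring
      · simp [h1, h2]
  have hg : ∀ a : Fin 4, a ≠ 3 → ∃ g : S4, g i = a ∧ g j = 3 := by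
    clear key hp hne hx0 hs
    revert hne'
    clear hij
    revert i j
    decide +kernel
  have hb : ∀ a : Fin 3, stdEquiv.symm (Pi.single a 1) ∈ p := by
    intro a
    obtain ⟨g, h1, h2⟩ := hg a.castSucc (by revert a; decide)
    apply key g
    rw [h1, h2]
    ext k
    fin_cases a <;> fin_cases k <;> simp [stdEquiv, Pi.single_apply]
  rw [eq_top_iff]
  intro y _
  have : y = ∑ a, stdEquiv y a • stdEquiv.symm (Pi.single a 1) := by
    apply stdEquiv.injective
    simp only [map_sum, map_smul, LinearEquiv.apply_symm_apply]
    ext k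
    simp [Pi.single_apply]
  rw [this]
  exact p.sum_mem fun a _ => p.smul_mem _ (hb a)

lemma hom_zero {W: Type} [AddCommGroup W] [Module ℂ W] (ρ : Representation ℂ S4 W)
  (h2 : Module.finrank ℂ W = 2)
  (hirr : ∀ p : Submodule ℂ W, (∀ π : S4, ∀ x ∈ p, ρ π x ∈ p) → p = ⊥ ∨ p = ⊤)
    {V : Type*} [AddCommGroup V] [Module ℂ V] [FiniteDimensional ℂ V]
    (σ : Representation ℂ S4 V)
    (hV : ∀ p : Submodule ℂ V, (∀ π : S4, ∀ x ∈ p, σ π x ∈ p) → p ≠ ⊥ → p = ⊤)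
    (hd : Module.finrank ℂ V ≠ 2) :
    Module.finrank ℂ (equivariantHoms W V (fun g => ρ g) (fun g => σ g)) = 0 := by
  have : equivariantHoms W V (fun g => ρ g) (fun g => σ g) = ⊥ := by
    rw [eq_bot_iff]
    intro T hT
    have hT' : ∀ g v, T (ρ g v) = σ g (T v) := fun g v => LinearMap.congr_fun (hT g) v
    rw [Submodule.mem_bot]
    by_contra hne
    have hk : LinearMap.ker T = ⊥ := by
      rcases hirr (LinearMap.ker T) (fun π x hx => by
        rw [LinearMap.mem_ker] at hx ⊢
        rw [hT', hx, map_zero]) with h | h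
      · exact h
      · exact absurd (LinearMap.ker_eq_top.1 h) hne
    have hr : LinearMap.range T = ⊤ := by
      apply hV
      · rintro π _ ⟨y, rfl⟩
        exact ⟨ρ π y, hT' _ _⟩
      · intro h
        exact hne (LinearMap.range_eq_bot.1 h)
    have e := LinearEquiv.ofBijective T ⟨LinearMap.ker_eq_bot.1 hk, LinearMap.range_eq_top.1 hr⟩
    exact hd (e.finrank_eq ▸ h2)
  rw [this, finrank_bot]

lemma two_char {W: Type} [AddCommGroup W] [Module ℂ W] (ρ : Representation ℂ S4 W)
  (h2 : Module.finrank ℂ W = 2)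
  (hirr : ∀ p : Submodule ℂ W, (∀ π : S4, ∀ x ∈ p, ρ π x ∈ p) → p = ⊥ ∨ p = ⊤) :
    ρ.character 1 = 2 ∧ ρ.character rT = 0 ∧ ρ.character rV = 2 ∧
    ρ.character rC = -1 ∧ ρ.character rQ = 0 := by
  have : FiniteDimensional ℂ W := Module.finite_of_finrank_eq_succ h2
  have h1 : ρ.character 1 = 2 := by rw [Representation.char_one, h2]; norm_num
  have hC : ∀ p : Submodule ℂ ℂ, p ≠ ⊥ → p = ⊤ := fun p hp =>
    (eq_bot_or_eq_top p).resolve_left hp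
  have hstd : ∀ p : Submodule ℂ (sumZero 4), (∀ π : S4, ∀ x ∈ p, sgnTwist stdRep π x ∈ p) →
      ∀ π : S4, ∀ x ∈ p, stdAct 4 π x ∈ p := by
    intro p hp π x hx
    have h : ((Equiv.Perm.sign π : ℤ) : ℂ) • sgnTwist stdRep π x ∈ p := p.smul_mem _ (hp π x hx)
    convert h using 1
    rcases Int.units_eq_one_or (Equiv.Perm.sign π) with h | h <;>
      simp [sgnTwist, stdRep_apply, h]
  have e1 := hom_dim ρ trivRep
  have e2 := hom_dim ρ (sgnTwist trivRep)
  have e3 := hom_dim ρ stdRep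
  have e4 := hom_dim ρ (sgnTwist stdRep)
  rw [hom_zero ρ h2 hirr _ (fun p _ => hC p) (by simp)] at e1
  rw [hom_zero ρ h2 hirr _ (fun p _ => hC p) (by simp)] at e2
  rw [hom_zero ρ h2 hirr _ (fun p hp hn => std_irred p hp hn) (by rw [std_finrank]; norm_num)] at e3
  rw [hom_zero ρ h2 hirr _ (fun p hp hn => std_irred p (hstd p hp) hn)
    (by rw [std_finrank]; norm_num)] at e4
  simp only [sgnTwist_char, triv_char, std1, stdT, stdV, stdC, stdQ, sgnT, sgnV, sgnC, sgnQ, h1,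
    map_one, Units.val_one, Units.val_neg] at e1 e2 e3 e4
  push_cast at e1 e2 e3 e4
  refine ⟨h1, ?_, ?_, ?_, ?_⟩
  · linear_combination -(e1 - e2 + e3 - e4) / 24
  · linear_combination (e3 + e4) / 6
  · linear_combination -(e1 + e2) / 16 - (e3 + e4) / 16
  · linear_combination -(e1 - e2 - e3 + e4) / 24

lemma hom_dim' {V W : Type*} [AddCommGroup V] [Module ℂ V] [AddCommGroup W] [Module ℂ W]
    [FiniteDimensional ℂ V] [FiniteDimensional ℂ W]
    (ρ : Representation ℂ S4 V) (σ : Representation ℂ S4 W)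
    (r : S4 → V →ₗ[ℂ] V) (s : S4 → W →ₗ[ℂ] W) (hr : ∀ g, r g = ρ g) (hs : ∀ g, s g = σ g) :
    (24 : ℂ) * (Module.finrank ℂ (equivariantHoms V W r s) : ℂ) =
      ρ.character 1 * σ.character 1 + 6 * (ρ.character rT * σ.character rT)
      + 3 * (ρ.character rV * σ.character rV) + 8 * (ρ.character rC * σ.character rC)
      + 6 * (ρ.character rQ * σ.character rQ) := by
  rw [funext hr, funext hs]
  exact hom_dim ρ σ

lemma arith1 (d m : ℕ) (h : (24 : ℂ) * m = d ^ 4 + 6 * d ^ 3 + 3 * d ^ 2 + 8 * d ^ 2 + 6 * d) :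
    m = d * (d + 1) * (d + 2) * (d + 3) / 24 := by
  symm
  apply Nat.div_eq_of_eq_mul_right (by norm_num)
  have h' : ((d * (d + 1) * (d + 2) * (d + 3) : ℕ) : ℂ) = ((24 * m : ℕ) : ℂ) := by
    push_cast
    linear_combination -h
  exact_mod_cast h'

lemma arith2 (d m : ℕ) (h : (24 : ℂ) * m = d ^ 4 - 6 * d ^ 3 + 3 * d ^ 2 + 8 * d ^ 2 - 6 * d) :
    m = d * (d - 1) * (d - 2) * (d - 3) / 24 := by
  symm
  apply Nat.div_eq_of_eq_mul_right (by norm_num)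
  have h' : ((d * (d - 1) * (d - 2) * (d - 3) : ℕ) : ℂ) = ((24 * m : ℕ) : ℂ) := by
    rw [Nat.cast_mul 24 m, Nat.cast_ofNat, h]
    rcases d with _ | _ | _ | k
    · simp
    · norm_num
    · norm_num
    · rw [show k + 1 + 1 + 1 - 1 = k + 2 by omega, show k + 1 + 1 + 1 - 2 = k + 1 by omega,
        show k + 1 + 1 + 1 - 3 = k by omega]
      push_cast
      ring
  exact_mod_cast h'

lemma sq_sub_cast (d : ℕ) : (d : ℂ) * ((d ^ 2 - 1 : ℕ) : ℂ) = (d : ℂ) ^ 3 - d := by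
  rcases d with _ | k
  · simp
  · rw [Nat.cast_sub (Nat.one_le_pow _ _ (Nat.succ_pos k))]
    push_cast
    ring

lemma arith3 (d m : ℕ) (h : (24 : ℂ) * m = 2 * d ^ 4 + 6 * d ^ 2 - 8 * d ^ 2) :
    m = d ^ 2 * (d ^ 2 - 1) / 12 := by
  symm
  apply Nat.div_eq_of_eq_mul_right (by norm_num)
  have h' : ((d ^ 2 * (d ^ 2 - 1) : ℕ) : ℂ) = ((12 * m : ℕ) : ℂ) := by
    rw [Nat.cast_mul, Nat.cast_mul, Nat.cast_pow, Nat.cast_ofNat]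
    linear_combination -h / 2 + d * sq_sub_cast d
  exact_mod_cast h'

lemma arith4 (d m : ℕ) (h : (24 : ℂ) * m = 3 * d ^ 4 + 6 * d ^ 3 - 3 * d ^ 2 - 6 * d) :
    m = d * (d ^ 2 - 1) * (d + 2) / 8 := by
  symm
  apply Nat.div_eq_of_eq_mul_right (by norm_num)
  have h' : ((d * (d ^ 2 - 1) * (d + 2) : ℕ) : ℂ) = ((8 * m : ℕ) : ℂ) := by
    rw [Nat.cast_mul, Nat.cast_mul, Nat.cast_mul, Nat.cast_add, Nat.cast_ofNat, Nat.cast_ofNat]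
    linear_combination -h / 3 + (d + 2) * sq_sub_cast d
  exact_mod_cast h'

lemma arith5 (d m : ℕ) (h : (24 : ℂ) * m = 3 * d ^ 4 - 6 * d ^ 3 - 3 * d ^ 2 + 6 * d) :
    m = d * (d ^ 2 - 1) * (d - 2) / 8 := by
  symm
  apply Nat.div_eq_of_eq_mul_right (by norm_num)
  have h' : ((d * (d ^ 2 - 1) * (d - 2) : ℕ) : ℂ) = ((8 * m : ℕ) : ℂ) := by
    rw [Nat.cast_mul, Nat.cast_mul, Nat.cast_mul, Nat.cast_ofNat]
    have hh : ((d : ℂ) ^ 3 - d) * ((d - 2 : ℕ) : ℂ) = ((d : ℂ) ^ 3 - d) * (d - 2) := by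
      rcases d with _ | _ | k
      · simp
      · simp
      · rw [show k + 1 + 1 - 2 = k by omega]
        push_cast
        ring
    linear_combination -h / 3 + ((d - 2 : ℕ) : ℂ) * sq_sub_cast d + hh
  exact_mod_cast h'

theorem multiplicities_S4 (d : ℕ) :
    Module.finrank ℂ
        (equivariantHoms ℂ ((Fin 4 → Fin d) → ℂ)
          (fun _ : Equiv.Perm (Fin 4) => LinearMap.id) (Dact 4 d))
      = d * (d + 1) * (d + 2) * (d + 3) / 24 ∧
    Module.finrank ℂ
        (equivariantHoms ℂ ((Fin 4 → Fin d) → ℂ)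
          (fun π : Equiv.Perm (Fin 4) => ((Equiv.Perm.sign π : ℤ) : ℂ) • LinearMap.id)
          (Dact 4 d))
      = d * (d - 1) * (d - 2) * (d - 3) / 24 ∧
    (∀ (W : Type) [AddCommGroup W] [Module ℂ W]
        (ρW : Representation ℂ (Equiv.Perm (Fin 4)) W),
        Module.finrank ℂ W = 2 →
        (∀ p : Submodule ℂ W,
          (∀ π : Equiv.Perm (Fin 4), ∀ x ∈ p, ρW π x ∈ p) → p = ⊥ ∨ p = ⊤) →
        Module.finrank ℂ
            (equivariantHoms W ((Fin 4 → Fin d) → ℂ) (fun π => ρW π) (Dact 4 d))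
          = d ^ 2 * (d ^ 2 - 1) / 12) ∧
    Module.finrank ℂ
        (equivariantHoms (sumZero 4) ((Fin 4 → Fin d) → ℂ) (stdAct 4) (Dact 4 d))
      = d * (d ^ 2 - 1) * (d + 2) / 8 ∧
    Module.finrank ℂ
        (equivariantHoms (sumZero 4) ((Fin 4 → Fin d) → ℂ)
          (fun π : Equiv.Perm (Fin 4) => ((Equiv.Perm.sign π : ℤ) : ℂ) • stdAct 4 π)
          (Dact 4 d))
      = d * (d ^ 2 - 1) * (d - 2) / 8 := by

  refine ⟨?_, ?_, ?_, ?_, ?_⟩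
  · apply arith1
    refine (hom_dim' trivRep (Drep d) _ _ (fun _ => rfl) (fun _ => rfl)).trans ?_
    rw [D1, DT, DV, DC, DQ]
    simp only [triv_char]
    ring
  · apply arith2
    refine (hom_dim' (sgnTwist trivRep) (Drep d) _ _ (fun _ => rfl) (fun _ => rfl)).trans ?_
    rw [D1, DT, DV, DC, DQ]
    simp only [triv_char, sgnTwist_char, sgnT, sgnV, sgnC, sgnQ, map_one, Units.val_one,
      Units.val_neg]
    push_cast
    ring
  · intro W _ _ ρW h2 hirr
    have : FiniteDimensional ℂ W := Module.finite_of_finrank_eq_succ h2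
    obtain ⟨c1, c2, c3, c4, c5⟩ := two_char ρW h2 hirr
    apply arith3
    refine (hom_dim' ρW (Drep d) _ _ (fun _ => rfl) (fun _ => rfl)).trans ?_
    rw [D1, DT, DV, DC, DQ,
      c1, c2, c3, c4, c5]
    ring
  · apply arith4
    refine (hom_dim' stdRep (Drep d) _ _ (fun _ => rfl) (fun _ => rfl)).trans ?_
    rw [D1, DT, DV, DC, DQ,
      std1, stdT, stdV, stdC, stdQ]
    ring
  · apply arith5
    refine (hom_dim' (sgnTwist stdRep) (Drep d) _ _ (fun _ => rfl) (fun _ => rfl)).trans ?_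
    rw [D1, DT, DV, DC, DQ]
    simp only [sgnTwist_char, sgnT, sgnV, sgnC, sgnQ, map_one, Units.val_one,
      Units.val_neg, std1, stdT, stdV, stdC, stdQ]
    push_cast
    ring
end

section
/- Let d ≥ 3 be a natural number and let M be the complex matrix with rows and columns indexed by S₃ defined by M_{σ,π} = d^{l(σ⁻¹π)}. Then M is invertible and M⁻¹ = (1/(d³(d²−1)²(d²−4))) · ( M² − 3d(d²+1)·M + 3d⁴(d²−1)·1 ), where 1 denotes the identity matrix. -/
open Matrix

def cc3 (σ : Equiv.Perm (Fin 3)) : ℕ :=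
  if σ = 1 then 3 else if Equiv.Perm.sign σ = -1 then 2 else 1

theorem cycleCount_eq_cc3 : ∀ σ : Equiv.Perm (Fin 3), cycleCount σ = cc3 σ := by
  decide +kernel

/-- Indicator matrix of relative cycle count `k`. -/
def indMat (k : ℕ) : Matrix (Equiv.Perm (Fin 3)) (Equiv.Perm (Fin 3)) ℤ :=
  fun σ π => if cc3 (σ⁻¹ * π) = k then 1 else 0

theorem indMat_TT : indMat 2 * indMat 2 = (3 : ℤ) • 1 + (3 : ℤ) • indMat 1 := by decide +kernel
theorem indMat_TC : indMat 2 * indMat 1 = (2 : ℤ) • indMat 2 := by decide +kernel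
theorem indMat_CT : indMat 1 * indMat 2 = (2 : ℤ) • indMat 2 := by decide +kernel
theorem indMat_CC : indMat 1 * indMat 1 = (2 : ℤ) • 1 + indMat 1 := by decide +kernel
theorem indMat_three : indMat 3 = 1 := by decide +kernel

theorem cc3_cases (σ : Equiv.Perm (Fin 3)) : cc3 σ = 3 ∨ cc3 σ = 2 ∨ cc3 σ = 1 := by
  unfold cc3; split_ifs <;> simp

theorem inv_M_S3 (d : ℕ) (hd : 3 ≤ d)
    (M : Matrix (Equiv.Perm (Fin 3)) (Equiv.Perm (Fin 3)) ℂ)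
    (hM : ∀ σ π : Equiv.Perm (Fin 3), M σ π = (d : ℂ) ^ cycleCount (σ⁻¹ * π)) :
    IsUnit M.det ∧
      M⁻¹ = ((d : ℂ) ^ 3 * ((d : ℂ) ^ 2 - 1) ^ 2 * ((d : ℂ) ^ 2 - 4))⁻¹ •
        (M ^ 2 - (3 * (d : ℂ) * ((d : ℂ) ^ 2 + 1)) • M
          + (3 * (d : ℂ) ^ 4 * ((d : ℂ) ^ 2 - 1)) • (1 : Matrix (Equiv.Perm (Fin 3)) (Equiv.Perm (Fin 3)) ℂ)) := by
  let f := (Int.castRingHom ℂ).mapMatrix (m := Equiv.Perm (Fin 3))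
  obtain ⟨T, hT⟩ : ∃ T, T = f (indMat 2) := ⟨_, rfl⟩
  obtain ⟨C, hC⟩ : ∃ C, C = f (indMat 1) := ⟨_, rfl⟩
  have h1 : (1 : Matrix (Equiv.Perm (Fin 3)) (Equiv.Perm (Fin 3)) ℂ) = f (indMat 3) := by
    rw [indMat_three, map_one]
  have hMd : M = (d : ℂ) ^ 3 • 1 + (d : ℂ) ^ 2 • T + (d : ℂ) • C := by
    rw [h1, hT, hC]
    ext σ π
    rw [hM, cycleCount_eq_cc3]
    rcases cc3_cases (σ⁻¹ * π) with h | h | h <;> simp [f, indMat, h]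
  have hTT : T * T = (3 : ℂ) • 1 + (3 : ℂ) • C := by
    have := congrArg f indMat_TT
    rw [map_mul, map_add, map_zsmul, map_zsmul, map_one, ← hT, ← hC] at this
    rw [this, ← Int.cast_smul_eq_zsmul ℂ, ← Int.cast_smul_eq_zsmul ℂ]; norm_num
  have hTC : T * C = (2 : ℂ) • T := by
    have := congrArg f indMat_TC
    rw [map_mul, map_zsmul, ← hT, ← hC] at this
    rw [this, ← Int.cast_smul_eq_zsmul ℂ]; norm_num
  have hCT : C * T = (2 : ℂ) • T := by
    have := congrArg f indMat_CT
    rw [map_mul, map_zsmul, ← hT, ← hC] at this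
    rw [this, ← Int.cast_smul_eq_zsmul ℂ]; norm_num
  have hCC : C * C = (2 : ℂ) • 1 + C := by
    have := congrArg f indMat_CC
    rw [map_mul, map_add, map_zsmul, map_one, ← hC] at this
    rw [this, ← Int.cast_smul_eq_zsmul ℂ]; norm_num
  clear_value f
  clear hT hC h1 hM
  have hc : (d : ℂ) ^ 3 * ((d : ℂ) ^ 2 - 1) ^ 2 * ((d : ℂ) ^ 2 - 4) ≠ 0 := by
    have e : (d : ℂ) ^ 3 * ((d : ℂ) ^ 2 - 1) ^ 2 * ((d : ℂ) ^ 2 - 4)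
        = (((d : ℝ) ^ 3 * ((d : ℝ) ^ 2 - 1) ^ 2 * ((d : ℝ) ^ 2 - 4) : ℝ) : ℂ) := by push_cast; rfl
    rw [e, Complex.ofReal_ne_zero]
    have h3 : (3 : ℝ) ≤ d := by exact_mod_cast hd
    have a : 0 < (d : ℝ) ^ 2 - 1 := by nlinarith
    have b : 0 < (d : ℝ) ^ 2 - 4 := by nlinarith
    positivity
  generalize (d : ℂ) = x at *
  have hM2 : M ^ 2 = (x ^ 6 + 3 * x ^ 4 + 2 * x ^ 2) • 1 + (2 * x ^ 5 + 4 * x ^ 3) • T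
      + (5 * x ^ 4 + x ^ 2) • C := by
    rw [sq, hMd]
    simp only [mul_add, add_mul, smul_mul_assoc, mul_smul_comm, hTT, hTC, hCT, hCC, one_mul,
      mul_one]
    module
  have key : M * (M ^ 2 - (3 * x * (x ^ 2 + 1)) • M + (3 * x ^ 4 * (x ^ 2 - 1)) • 1)
      = (x ^ 3 * (x ^ 2 - 1) ^ 2 * (x ^ 2 - 4)) • 1 := by
    rw [hM2, hMd]
    simp only [mul_add, add_mul, mul_sub, smul_mul_assoc, mul_smul_comm, hTT, hTC, hCT, hCC,
      one_mul, mul_one]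
    module
  have key2 : M * ((x ^ 3 * (x ^ 2 - 1) ^ 2 * (x ^ 2 - 4))⁻¹ •
      (M ^ 2 - (3 * x * (x ^ 2 + 1)) • M + (3 * x ^ 4 * (x ^ 2 - 1)) • 1)) = 1 := by
    rw [mul_smul_comm, key, smul_smul, inv_mul_cancel₀ hc, one_smul]
  exact ⟨Matrix.isUnit_det_of_right_inverse key2, Matrix.inv_eq_right_inv key2⟩
end

section
/- Let d ≥ 4 be a natural number and let M be the complex matrix with rows and columns indexed by S₄ defined by M_{σ,π} = d^{l(σ⁻¹π)}. Then M is invertible and M⁻¹ = (1/s₅)·( M⁴ − s₁·M³ + s₂·M² − s₃·M + s₄·1 ), where s₁ = d²(5d²+19), s₂ = 2d²(d²−1)(5d⁴+23d²+20), s₃ = 2d⁴(d²−1)²(5d⁴+7d²+12), s₄ = d⁴(d²−1)³(d²−4)(5d⁴−9d²+36), s₅ = d⁶(d²−1)⁴(d²−4)²(d²−9), and 1 denotes the identity matrix. -/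
open Matrix

/-- The conjugacy class of a permutation of four letters, coded by an element of `Fin 5`. -/
def s4cls (g : Equiv.Perm (Fin 4)) : Fin 5 :=
  if g 0 = 0 ∧ g 1 = 1 ∧ g 2 = 2 then 0
  else if (Finset.univ.filter fun x => g x = x).card = 2 then 1
  else if (Finset.univ.filter fun x => g x = x).card = 1 then 3
  else if g (g 0) = 0 then 2 else 4

def s4N (i j : Fin 5) (g : Equiv.Perm (Fin 4)) : ℕ :=
  (Finset.univ.filter fun r : Equiv.Perm (Fin 4) => (s4cls r, s4cls (r⁻¹ * g)) = (i, j)).card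

/-- Class multiplication constants of the symmetric group on four letters. -/
def s4T : Fin 5 → Fin 5 → Fin 5 → ℕ :=
  ![![![1, 0, 0, 0, 0], ![0, 6, 0, 0, 0], ![0, 0, 3, 0, 0], ![0, 0, 0, 8, 0], ![0, 0, 0, 0, 6]],
    ![![0, 1, 0, 0, 0], ![1, 0, 1, 4, 0], ![0, 1, 0, 0, 2], ![0, 4, 0, 0, 4], ![0, 0, 2, 4, 0]],
    ![![0, 0, 1, 0, 0], ![0, 2, 0, 0, 4], ![1, 0, 2, 0, 0], ![0, 0, 0, 8, 0], ![0, 4, 0, 0, 2]],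
    ![![0, 0, 0, 1, 0], ![0, 3, 0, 0, 3], ![0, 0, 0, 3, 0], ![1, 0, 3, 4, 0], ![0, 3, 0, 0, 3]],
    ![![0, 0, 0, 0, 1], ![0, 0, 2, 4, 0], ![0, 2, 0, 0, 1], ![0, 4, 0, 0, 4], ![1, 0, 1, 4, 0]]]

def s4L : Fin 5 → ℕ := ![4, 3, 2, 2, 1]

set_option maxRecDepth 100000 in
theorem s4_cycleCount : ∀ g : Equiv.Perm (Fin 4), cycleCount g = s4L (s4cls g) := by
  decide +kernel

set_option maxRecDepth 100000 in
theorem s4_N : ∀ g : Equiv.Perm (Fin 4), ∀ i j, s4N i j g = s4T (s4cls g) i j := by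
  decide +kernel

theorem s4_one : ∀ g : Equiv.Perm (Fin 4), s4cls g = 0 ↔ g = 1 := by
  decide +kernel

/-- The matrix attached to a class function. -/
def s4A (a : Fin 5 → ℂ) : Matrix (Equiv.Perm (Fin 4)) (Equiv.Perm (Fin 4)) ℂ :=
  fun σ π => a (s4cls (σ⁻¹ * π))

/-- Convolution of class functions. -/
def s4conv (a b : Fin 5 → ℂ) : Fin 5 → ℂ :=
  fun k => ∑ p : Fin 5 × Fin 5, (s4T k p.1 p.2 : ℂ) * (a p.1 * b p.2)

theorem s4A_mul (a b : Fin 5 → ℂ) : s4A a * s4A b = s4A (s4conv a b) := by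
  ext σ π
  rw [Matrix.mul_apply]
  simp only [s4A, s4conv]
  rw [← Equiv.sum_comp (Equiv.mulLeft σ)]
  set g := σ⁻¹ * π with hg
  have h1 : ∀ r : Equiv.Perm (Fin 4),
      a (s4cls (σ⁻¹ * (Equiv.mulLeft σ r))) * b (s4cls ((Equiv.mulLeft σ r)⁻¹ * π))
        = a (s4cls r) * b (s4cls (r⁻¹ * g)) := by
    intro r
    simp [hg, mul_assoc]
  rw [Finset.sum_congr rfl fun r _ => h1 r]
  rw [← Finset.sum_fiberwise Finset.univ
    (fun r : Equiv.Perm (Fin 4) => (s4cls r, s4cls (r⁻¹ * g)))]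
  refine Finset.sum_congr rfl ?_
  rintro ⟨i, j⟩ _
  rw [← s4_N g i j, s4N, ← nsmul_eq_mul]
  apply Finset.sum_eq_card_nsmul
  intro r hr
  have h := (Finset.mem_filter.1 hr).2
  simp only [Prod.mk.injEq] at h
  rw [h.1, h.2]

theorem s4A_one : (1 : Matrix (Equiv.Perm (Fin 4)) (Equiv.Perm (Fin 4)) ℂ)
    = s4A ![1, 0, 0, 0, 0] := by
  ext σ π
  rw [Matrix.one_apply]
  by_cases h : σ = π
  · subst h
    have : s4cls 1 = 0 := (s4_one 1).2 rfl
    simp [s4A, this]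
  · have : s4cls (σ⁻¹ * π) ≠ 0 := by
      intro h0
      exact h (inv_mul_eq_one.1 ((s4_one _).1 h0))
    rw [if_neg h, s4A]
    generalize s4cls (σ⁻¹ * π) = k at this
    fin_cases k <;> simp_all

theorem s4conv_x (x v0 v1 v2 v3 v4 : ℂ) :
    s4conv ![x ^ 4, x ^ 3, x ^ 2, x ^ 2, x] ![v0, v1, v2, v3, v4] =
    ![x ^ 4 * v0 + 6 * x ^ 3 * v1 + 3 * x ^ 2 * v2 + 8 * x ^ 2 * v3 + 6 * x * v4,
      x ^ 4 * v1 + x ^ 3 * (v0 + v2 + 4 * v3) + x ^ 2 * (v1 + 2 * v4) + x ^ 2 * (4 * v1 + 4 * v4)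
        + x * (2 * v2 + 4 * v3),
      x ^ 4 * v2 + x ^ 3 * (2 * v1 + 4 * v4) + x ^ 2 * (v0 + 2 * v2) + x ^ 2 * (8 * v3)
        + x * (4 * v1 + 2 * v4),
      x ^ 4 * v3 + x ^ 3 * (3 * v1 + 3 * v4) + x ^ 2 * (3 * v3) + x ^ 2 * (v0 + 3 * v2 + 4 * v3)
        + x * (3 * v1 + 3 * v4),
      x ^ 4 * v4 + x ^ 3 * (2 * v2 + 4 * v3) + x ^ 2 * (2 * v1 + v4) + x ^ 2 * (4 * v1 + 4 * v4)
        + x * (v0 + v2 + 4 * v3)] := by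
  ext k
  fin_cases k <;> simp [s4conv, s4T, Fintype.sum_prod_type, Fin.sum_univ_succ] <;> ring

theorem s4_vec_ext (a0 a1 a2 a3 a4 b0 b1 b2 b3 b4 : ℂ) (h0 : a0 = b0) (h1 : a1 = b1)
    (h2 : a2 = b2) (h3 : a3 = b3) (h4 : a4 = b4) :
    ![a0, a1, a2, a3, a4] = ![b0, b1, b2, b3, b4] := by
  rw [h0, h1, h2, h3, h4]

theorem s4_pow2 (x : ℂ) : s4A ![x ^ 4, x ^ 3, x ^ 2, x ^ 2, x] ^ 2 =
    s4A ![1 * x ^ 8 + 6 * x ^ 6 + 11 * x ^ 4 + 6 * x ^ 2,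
      2 * x ^ 7 + 10 * x ^ 5 + 12 * x ^ 3,
      4 * x ^ 6 + 18 * x ^ 4 + 2 * x ^ 2,
      5 * x ^ 6 + 16 * x ^ 4 + 3 * x ^ 2,
      14 * x ^ 5 + 10 * x ^ 3] := by
  rw [pow_two, s4A_mul, s4conv_x]
  congr 1
  apply s4_vec_ext <;> ring

theorem s4_pow3 (x : ℂ) : s4A ![x ^ 4, x ^ 3, x ^ 2, x ^ 2, x] ^ 3 =
    s4A ![1 * x ^ 12 + 18 * x ^ 10 + 123 * x ^ 8 + 344 * x ^ 6 + 90 * x ^ 4,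
      3 * x ^ 11 + 50 * x ^ 9 + 267 * x ^ 7 + 240 * x ^ 5 + 16 * x ^ 3,
      9 * x ^ 10 + 156 * x ^ 8 + 309 * x ^ 6 + 102 * x ^ 4,
      12 * x ^ 10 + 147 * x ^ 8 + 318 * x ^ 6 + 99 * x ^ 4,
      55 * x ^ 9 + 270 * x ^ 7 + 231 * x ^ 5 + 20 * x ^ 3] := by
  rw [pow_succ', s4_pow2, s4A_mul, s4conv_x]
  congr 1
  apply s4_vec_ext <;> ring

theorem s4_pow4 (x : ℂ) : s4A ![x ^ 4, x ^ 3, x ^ 2, x ^ 2, x] ^ 4 =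
    s4A ![1 * x ^ 16 + 36 * x ^ 14 + 546 * x ^ 12 + 3920 * x ^ 10 + 6621 * x ^ 8 + 2580 * x ^ 6 + 120 * x ^ 4,
      4 * x ^ 15 + 140 * x ^ 13 + 1780 * x ^ 11 + 6020 * x ^ 9 + 5080 * x ^ 7 + 800 * x ^ 5,
      16 * x ^ 14 + 620 * x ^ 12 + 3844 * x ^ 10 + 6620 * x ^ 8 + 2620 * x ^ 6 + 104 * x ^ 4,
      22 * x ^ 14 + 600 * x ^ 12 + 3864 * x ^ 10 + 6620 * x ^ 8 + 2610 * x ^ 6 + 108 * x ^ 4,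
      140 * x ^ 13 + 1820 * x ^ 11 + 5940 * x ^ 9 + 5140 * x ^ 7 + 784 * x ^ 5] := by
  rw [pow_succ', s4_pow3, s4A_mul, s4conv_x]
  congr 1
  apply s4_vec_ext <;> ring

theorem s4_pow5 (x : ℂ) : s4A ![x ^ 4, x ^ 3, x ^ 2, x ^ 2, x] ^ 5 =
    s4A ![1 * x ^ 20 + 60 * x ^ 18 + 1610 * x ^ 16 + 22100 * x ^ 14 + 96105 * x ^ 12 + 141520 * x ^ 10 + 64500 * x ^ 8 + 5880 * x ^ 6,
      5 * x ^ 19 + 300 * x ^ 17 + 7006 * x ^ 15 + 52700 * x ^ 13 + 133685 * x ^ 11 + 112400 * x ^ 9 + 25040 * x ^ 7 + 640 * x ^ 5,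
      25 * x ^ 18 + 1720 * x ^ 16 + 22110 * x ^ 14 + 95700 * x ^ 12 + 142121 * x ^ 10 + 64140 * x ^ 8 + 5960 * x ^ 6,
      35 * x ^ 18 + 1690 * x ^ 16 + 22110 * x ^ 14 + 95800 * x ^ 12 + 141971 * x ^ 10 + 64230 * x ^ 8 + 5940 * x ^ 6,
      285 * x ^ 17 + 7140 * x ^ 15 + 52430 * x ^ 13 + 133900 * x ^ 11 + 112365 * x ^ 9 + 25000 * x ^ 7 + 656 * x ^ 5] := by
  rw [pow_succ', s4_pow4, s4A_mul, s4conv_x]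
  congr 1
  apply s4_vec_ext <;> ring

set_option maxHeartbeats 1000000 in
theorem s4_key (x : ℂ) (M : Matrix (Equiv.Perm (Fin 4)) (Equiv.Perm (Fin 4)) ℂ)
    (hM : M = s4A ![x ^ 4, x ^ 3, x ^ 2, x ^ 2, x]) :
    M * (M ^ 4 - (x ^ 2 * (5 * x ^ 2 + 19)) • M ^ 3
          + (2 * x ^ 2 * (x ^ 2 - 1) * (5 * x ^ 4 + 23 * x ^ 2 + 20)) • M ^ 2
          - (2 * x ^ 4 * (x ^ 2 - 1) ^ 2 * (5 * x ^ 4 + 7 * x ^ 2 + 12)) • M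
          + (x ^ 4 * (x ^ 2 - 1) ^ 3 * (x ^ 2 - 4) * (5 * x ^ 4 - 9 * x ^ 2 + 36)) •
            (1 : Matrix (Equiv.Perm (Fin 4)) (Equiv.Perm (Fin 4)) ℂ))
      = (x ^ 6 * (x ^ 2 - 1) ^ 4 * (x ^ 2 - 4) ^ 2 * (x ^ 2 - 9)) • 1 := by
  have hcomb : ∀ (p q r s t : ℂ) (a b c e f g : Fin 5 → ℂ),
      (∀ k, a k - p * b k + q * c k - r * e k + s * f k = t * g k) →
      s4A a - p • s4A b + q • s4A c - r • s4A e + s • s4A f = t • s4A g := by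
    intro p q r s t a b c e f g h
    ext σ π
    exact h _
  have hexp : ∀ p q r s : ℂ, M * (M ^ 4 - p • M ^ 3 + q • M ^ 2 - r • M + s • 1)
      = M ^ 5 - p • M ^ 4 + q • M ^ 3 - r • M ^ 2 + s • M := by
    intro p q r s
    simp only [mul_add, mul_sub, mul_smul_comm, mul_one, ← pow_succ', ← pow_two]
  rw [hexp, hM, s4_pow5, s4_pow4, s4_pow3, s4_pow2, s4A_one]
  apply hcomb
  intro k
  fin_cases k
  · change (1 * x ^ 20 + 60 * x ^ 18 + 1610 * x ^ 16 + 22100 * x ^ 14 + 96105 * x ^ 12 + 141520 * x ^ 10 + 64500 * x ^ 8 + 5880 * x ^ 6) - _ * (1 * x ^ 16 + 36 * x ^ 14 + 546 * x ^ 12 + 3920 * x ^ 10 + 6621 * x ^ 8 + 2580 * x ^ 6 + 120 * x ^ 4)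
      + _ * (1 * x ^ 12 + 18 * x ^ 10 + 123 * x ^ 8 + 344 * x ^ 6 + 90 * x ^ 4) - _ * (1 * x ^ 8 + 6 * x ^ 6 + 11 * x ^ 4 + 6 * x ^ 2)
      + _ * (x ^ 4) = _ * (1 : ℂ)
    ring
  · change (5 * x ^ 19 + 300 * x ^ 17 + 7006 * x ^ 15 + 52700 * x ^ 13 + 133685 * x ^ 11 + 112400 * x ^ 9 + 25040 * x ^ 7 + 640 * x ^ 5) - _ * (4 * x ^ 15 + 140 * x ^ 13 + 1780 * x ^ 11 + 6020 * x ^ 9 + 5080 * x ^ 7 + 800 * x ^ 5)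
      + _ * (3 * x ^ 11 + 50 * x ^ 9 + 267 * x ^ 7 + 240 * x ^ 5 + 16 * x ^ 3) - _ * (2 * x ^ 7 + 10 * x ^ 5 + 12 * x ^ 3)
      + _ * (x ^ 3) = _ * (0 : ℂ)
    ring
  · change (25 * x ^ 18 + 1720 * x ^ 16 + 22110 * x ^ 14 + 95700 * x ^ 12 + 142121 * x ^ 10 + 64140 * x ^ 8 + 5960 * x ^ 6) - _ * (16 * x ^ 14 + 620 * x ^ 12 + 3844 * x ^ 10 + 6620 * x ^ 8 + 2620 * x ^ 6 + 104 * x ^ 4)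
      + _ * (9 * x ^ 10 + 156 * x ^ 8 + 309 * x ^ 6 + 102 * x ^ 4) - _ * (4 * x ^ 6 + 18 * x ^ 4 + 2 * x ^ 2)
      + _ * (x ^ 2) = _ * (0 : ℂ)
    ring
  · change (35 * x ^ 18 + 1690 * x ^ 16 + 22110 * x ^ 14 + 95800 * x ^ 12 + 141971 * x ^ 10 + 64230 * x ^ 8 + 5940 * x ^ 6) - _ * (22 * x ^ 14 + 600 * x ^ 12 + 3864 * x ^ 10 + 6620 * x ^ 8 + 2610 * x ^ 6 + 108 * x ^ 4)
      + _ * (12 * x ^ 10 + 147 * x ^ 8 + 318 * x ^ 6 + 99 * x ^ 4) - _ * (5 * x ^ 6 + 16 * x ^ 4 + 3 * x ^ 2)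
      + _ * (x ^ 2) = _ * (0 : ℂ)
    ring
  · change (285 * x ^ 17 + 7140 * x ^ 15 + 52430 * x ^ 13 + 133900 * x ^ 11 + 112365 * x ^ 9 + 25000 * x ^ 7 + 656 * x ^ 5) - _ * (140 * x ^ 13 + 1820 * x ^ 11 + 5940 * x ^ 9 + 5140 * x ^ 7 + 784 * x ^ 5)
      + _ * (55 * x ^ 9 + 270 * x ^ 7 + 231 * x ^ 5 + 20 * x ^ 3) - _ * (14 * x ^ 5 + 10 * x ^ 3)
      + _ * (x) = _ * (0 : ℂ)
    ring

theorem inv_M_S4 (d : ℕ) (hd : 4 ≤ d)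
    (M : Matrix (Equiv.Perm (Fin 4)) (Equiv.Perm (Fin 4)) ℂ)
    (hM : ∀ σ π : Equiv.Perm (Fin 4), M σ π = (d : ℂ) ^ cycleCount (σ⁻¹ * π)) :
    IsUnit M.det ∧
      M⁻¹ = ((d : ℂ) ^ 6 * ((d : ℂ) ^ 2 - 1) ^ 4 * ((d : ℂ) ^ 2 - 4) ^ 2 * ((d : ℂ) ^ 2 - 9))⁻¹ •
        (M ^ 4 - ((d : ℂ) ^ 2 * (5 * (d : ℂ) ^ 2 + 19)) • M ^ 3
          + (2 * (d : ℂ) ^ 2 * ((d : ℂ) ^ 2 - 1) * (5 * (d : ℂ) ^ 4 + 23 * (d : ℂ) ^ 2 + 20)) • M ^ 2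
          - (2 * (d : ℂ) ^ 4 * ((d : ℂ) ^ 2 - 1) ^ 2 * (5 * (d : ℂ) ^ 4 + 7 * (d : ℂ) ^ 2 + 12)) • M
          + ((d : ℂ) ^ 4 * ((d : ℂ) ^ 2 - 1) ^ 3 * ((d : ℂ) ^ 2 - 4) * (5 * (d : ℂ) ^ 4 - 9 * (d : ℂ) ^ 2 + 36)) •
            (1 : Matrix (Equiv.Perm (Fin 4)) (Equiv.Perm (Fin 4)) ℂ)) := by
  have hMA : M = s4A ![(d : ℂ) ^ 4, (d : ℂ) ^ 3, (d : ℂ) ^ 2, (d : ℂ) ^ 2, (d : ℂ)] := by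
    ext σ π
    rw [hM, s4_cycleCount, s4A]
    generalize s4cls (σ⁻¹ * π) = k
    fin_cases k <;> simp [s4L]
  have key := s4_key (d : ℂ) M hMA
  have hne : ∀ k : ℕ, k < 4 → (d : ℂ) ^ 2 - (k : ℂ) ^ 2 ≠ 0 := by
    intro k hk h
    have h' : (d : ℂ) ^ 2 = (k : ℂ) ^ 2 := sub_eq_zero.1 h
    have h'' : d ^ 2 = k ^ 2 := by exact_mod_cast h'
    have : k ^ 2 < d ^ 2 := Nat.pow_lt_pow_left (by omega) (by norm_num)
    omega
  have e0 : (d : ℂ) ≠ 0 := by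
    have : d ≠ 0 := by omega
    exact_mod_cast this
  have e1 : (d : ℂ) ^ 2 - 1 ≠ 0 := by
    have := hne 1 (by norm_num)
    norm_num at this
    exact this
  have e2 : (d : ℂ) ^ 2 - 4 ≠ 0 := by
    have := hne 2 (by norm_num)
    norm_num at this
    exact this
  have e3 : (d : ℂ) ^ 2 - 9 ≠ 0 := by
    have := hne 3 (by norm_num)
    norm_num at this
    exact this
  have hs : (d : ℂ) ^ 6 * ((d : ℂ) ^ 2 - 1) ^ 4 * ((d : ℂ) ^ 2 - 4) ^ 2 * ((d : ℂ) ^ 2 - 9) ≠ 0 :=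
    mul_ne_zero (mul_ne_zero (mul_ne_zero (pow_ne_zero _ e0) (pow_ne_zero _ e1))
      (pow_ne_zero _ e2)) e3
  have hinv := congrArg (fun X => ((d : ℂ) ^ 6 * ((d : ℂ) ^ 2 - 1) ^ 4 * ((d : ℂ) ^ 2 - 4) ^ 2
    * ((d : ℂ) ^ 2 - 9))⁻¹ • X) key
  simp only [smul_smul, inv_mul_cancel₀ hs, one_smul] at hinv
  rw [← Matrix.mul_smul] at hinv
  exact ⟨Matrix.isUnit_det_of_right_inverse hinv, Matrix.inv_eq_right_inv hinv⟩
end
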